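/- Let n ≥ 2, 0 < α < 1, and let Ω ∈ L(log L)^{1/n'}(𝕊^{n−1}) have mean zero. Then: (i) for n < p < n/α and 1/q = 1/p − α/n there is C with ‖T_{Ω,α}f‖_{L^q(ℝ^n)} ≤ C ‖∇f‖_{L^p(ℝ^n)} for all f ∈ C_c^∞(ℝ^n); (ii) there is C with ‖T_{Ω,α}f‖_{L^{n/(1−α),∞}(ℝ^n)} ≤ C ‖∇f‖_{L^n(ℝ^n)} for all f ∈ C_c^∞(ℝ^n). -/

import Mathlib

open MeasureTheory Metric Set Filter
open scoped ENNReal NNReal Topology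

noncomputable section

abbrev Rn (n : ℕ) := EuclideanSpace ℝ (Fin n)

/-- An axis-parallel half-open cube in `ℝⁿ`. -/
structure Cube (n : ℕ) where
  corner : Fin n → ℝ
  side : ℝ
  side_pos : 0 < side

/-- The set of points of a cube. -/
def Cube.carrier {n : ℕ} (Q : Cube n) : Set (Rn n) :=
  {x | ∀ i, Q.corner i ≤ x i ∧ x i < Q.corner i + Q.side}

/-- Surface measure on the unit sphere `𝕊^{n-1} ⊆ ℝⁿ`. -/
def sphereMeasure (n : ℕ) : Measure (Rn n) :=
  (MeasureTheory.Measure.hausdorffMeasure ((n : ℝ) - 1)).restrict (sphere (0 : Rn n) 1)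

/-- `f ∈ C_c^∞(ℝⁿ)`. -/
def IsCcSmooth {n : ℕ} (f : Rn n → ℝ) : Prop :=
  ContDiff ℝ (⊤ : ℕ∞) f ∧ HasCompactSupport f

/-- Truncated rough fractional singular integral. -/
def roughOpTrunc (n : ℕ) (α : ℝ) (Ω f : Rn n → ℝ) (x : Rn n) (ε : ℝ) : ℝ :=
  ∫ y in {y : Rn n | ε < ‖y‖}, (Ω (‖y‖⁻¹ • y) / ‖y‖ ^ ((n : ℝ) + 1 - α)) * f (x - y)

/-- The rough fractional singular integral `T_{Ω,α} f`, as a principal value. -/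
def roughOp (n : ℕ) (α : ℝ) (Ω f : Rn n → ℝ) (x : Rn n) : ℝ :=
  limUnder (𝓝[>] (0 : ℝ)) (roughOpTrunc n α Ω f x)

/-- Riesz potential (modulo its normalizing constant) of a nonnegative function. -/
def rieszPot (n : ℕ) (α : ℝ) (g : Rn n → ℝ) (x : Rn n) : ℝ≥0∞ :=
  ∫⁻ y, ENNReal.ofReal (g y) / ENNReal.ofReal (‖x - y‖ ^ ((n : ℝ) - α))

/-- `|∇f|`. -/
def gradNorm {n : ℕ} (f : Rn n → ℝ) (y : Rn n) : ℝ := ‖gradient f y‖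

/-- Weak Lorentz norm `‖Ω‖_{L^{r,∞}(𝕊^{n-1})}`. -/
def weakLorentzSphere (n : ℕ) (r : ℝ) (Ω : Rn n → ℝ) : ℝ≥0∞ :=
  ⨆ (t : ℝ) (_ : 0 < t), ENNReal.ofReal t * sphereMeasure n {y | t < |Ω y|} ^ (1 / r)

/-- Lorentz norm `‖Ω‖_{L^{r,q}(𝕊^{n-1})}`. -/
def lorentzSphere (n : ℕ) (r q : ℝ) (Ω : Rn n → ℝ) : ℝ≥0∞ :=
  (ENNReal.ofReal r *
      ∫⁻ t in Ioi (0 : ℝ),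
        ENNReal.ofReal t ^ q * sphereMeasure n {y | t < |Ω y|} ^ (q / r) / ENNReal.ofReal t) ^ (1 / q)

/-- The Young function `Φ(t) = t log(1+t)^{1/n'}`, `1/n' = (n-1)/n`. -/
def orliczYoung (n : ℕ) (t : ℝ) : ℝ := t * Real.log (1 + t) ^ (((n : ℝ) - 1) / n)

/-- Admissible Orlicz levels for the `L(log L)^{1/n'}` norm w.r.t. normalized surface measure. -/
def orliczSet (n : ℕ) (Ω : Rn n → ℝ) : Set ℝ :=
  {lam | 0 < lam ∧ ⨍ y, orliczYoung n (|Ω y| / lam) ∂sphereMeasure n ≤ 1}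

/-- Orlicz norm `‖Ω‖_{L(log L)^{1/n'}(𝕊^{n-1})}`. -/
def orliczSphereNorm (n : ℕ) (Ω : Rn n → ℝ) : ℝ := sInf (orliczSet n Ω)

/-- A sparse family of cubes. -/
def IsSparse {n : ℕ} (𝒮 : Set (Cube n)) : Prop :=
  ∃ E : Cube n → Set (Rn n),
    (∀ Q ∈ 𝒮, E Q ⊆ Q.carrier ∧ volume Q.carrier ≤ 2 * volume (E Q)) ∧
    𝒮.Pairwise fun Q P => Disjoint (E Q) (E P)

/-- A dyadic grid of cubes. -/
def IsDyadicGrid {n : ℕ} (𝒟 : Set (Cube n)) : Prop :=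
  (∀ Q ∈ 𝒟, ∃ k : ℤ, Q.side = (2 : ℝ) ^ k) ∧
  (∀ (k : ℤ) (x : Rn n), ∃! Q : Cube n, Q ∈ 𝒟 ∧ Q.side = (2 : ℝ) ^ k ∧ x ∈ Q.carrier) ∧
  (∀ Q ∈ 𝒟, ∀ P ∈ 𝒟, Disjoint Q.carrier P.carrier ∨ Q.carrier ⊆ P.carrier ∨ P.carrier ⊆ Q.carrier)

/-- The shifted dyadic grid `𝒟_t = {2^k([0,1)^n + m + (-1)^k t)}`. -/
def shiftedGrid (n : ℕ) (t : Fin n → ℝ) : Set (Cube n) :=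
  {Q | ∃ (k : ℤ) (m : Fin n → ℤ),
      Q.side = (2 : ℝ) ^ k ∧ Q.corner = fun i => (2 : ℝ) ^ k * ((m i : ℝ) + (-1 : ℝ) ^ k * t i)}

/-- `(⨍_Q |g|^s)^{1/s}` as an extended nonnegative real. -/
def avgLs (n : ℕ) (s : ℝ) (Q : Cube n) (g : Rn n → ℝ) : ℝ≥0∞ :=
  ((volume Q.carrier)⁻¹ * ∫⁻ y in Q.carrier, ENNReal.ofReal |g y| ^ s) ^ (1 / s)

/-- The `L^s` sparse (or dyadic) fractional operator `I^𝒮_{α,L^s}`. -/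
def sparseOpLs (n : ℕ) (α s : ℝ) (𝒮 : Set (Cube n)) (g : Rn n → ℝ) (x : Rn n) : ℝ≥0∞ :=
  ∑' Q : 𝒮, Set.indicator (Q : Cube n).carrier
      (fun _ => ENNReal.ofReal ((Q : Cube n).side ^ α) * avgLs n s (Q : Cube n) g) x

/-- The `L^s` fractional maximal operator `M_{α,L^s}`. -/
def maxOpLs (n : ℕ) (α s : ℝ) (g : Rn n → ℝ) (x : Rn n) : ℝ≥0∞ :=
  ⨆ (Q : Cube n) (_ : x ∈ Q.carrier), ENNReal.ofReal (Q.side ^ α) * avgLs n s Q g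

/-- The measure `w dx` associated with a weight `w`. -/
def wMeasure (n : ℕ) (w : Rn n → ℝ) : Measure (Rn n) :=
  volume.withDensity fun x => ENNReal.ofReal (w x)

/-- Muckenhoupt `A_∞` (via the standard fair-proportion characterization). -/
def IsAinfty {n : ℕ} (w : Rn n → ℝ) : Prop :=
  ∃ C > (0 : ℝ), ∃ δ > (0 : ℝ), ∀ Q : Cube n, ∀ S ⊆ Q.carrier, MeasurableSet S →
    wMeasure n w S ≤
      ENNReal.ofReal C * (volume S / volume Q.carrier) ^ δ * wMeasure n w Q.carrier

/-- `‖g‖_{L^p(w)}` for an `ℝ≥0∞`-valued `g`. -/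
def lpNormW (n : ℕ) (p : ℝ) (w : Rn n → ℝ) (g : Rn n → ℝ≥0∞) : ℝ≥0∞ :=
  (∫⁻ x, g x ^ p ∂wMeasure n w) ^ (1 / p)

/-- `‖g‖_{L^{p,∞}(w)}` for an `ℝ≥0∞`-valued `g`. -/
def weakNormW (n : ℕ) (p : ℝ) (w : Rn n → ℝ) (g : Rn n → ℝ≥0∞) : ℝ≥0∞ :=
  ⨆ (lam : ℝ) (_ : 0 < lam),
    ENNReal.ofReal lam * wMeasure n w {x | ENNReal.ofReal lam < g x} ^ (1 / p)

/-- Unweighted `L^p` "norm" of an `ℝ≥0∞`-valued function. -/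
def lqNorm (n : ℕ) (p : ℝ) (g : Rn n → ℝ≥0∞) : ℝ≥0∞ :=
  (∫⁻ x, g x ^ p) ^ (1 / p)

/-- Unweighted weak `L^p` norm of an `ℝ≥0∞`-valued function. -/
def weakNorm (n : ℕ) (p : ℝ) (g : Rn n → ℝ≥0∞) : ℝ≥0∞ :=
  ⨆ (lam : ℝ) (_ : 0 < lam),
    ENNReal.ofReal lam * volume {x | ENNReal.ofReal lam < g x} ^ (1 / p)

/-- Maximal function of a measure over cubes. -/
def measMax (n : ℕ) (μ : Measure (Rn n)) (x : Rn n) : ℝ≥0∞ :=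
  ⨆ (Q : Cube n) (_ : x ∈ Q.carrier), μ Q.carrier / volume Q.carrier

/-- The rough fractional maximal operator `M_{Ω,α}`. -/
def roughMax (n : ℕ) (α : ℝ) (Ω f : Rn n → ℝ) (x : Rn n) : ℝ≥0∞ :=
  ⨆ (t : ℝ) (_ : 0 < t),
    ENNReal.ofReal (t ^ (α - 1)) * ((volume (ball (0 : Rn n) t))⁻¹ *
      ∫⁻ y in ball (0 : Rn n) t, ENNReal.ofReal |Ω (‖y‖⁻¹ • y) * f (x - y)|)

/-- Average of `f` over the ball `B(x,t)`. -/
def ballAvg {n : ℕ} (f : Rn n → ℝ) (x : Rn n) (t : ℝ) : ℝ :=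
  ⨍ y in ball x t, f y

/-- The sharp rough fractional maximal operator `M^#_{Ω,α}`. -/
def roughMaxSharp (n : ℕ) (α : ℝ) (Ω f : Rn n → ℝ) (x : Rn n) : ℝ≥0∞ :=
  ⨆ (t : ℝ) (_ : 0 < t),
    ENNReal.ofReal (t ^ (α - 1)) * ((volume (ball (0 : Rn n) t))⁻¹ *
      ∫⁻ y in ball (0 : Rn n) t,
        ENNReal.ofReal (|Ω (‖y‖⁻¹ • y)| * |f (x - y) - ballAvg f x t|))

/-- The natural rough maximal operator `M^♮_Ω` (with `α = 1`). -/
def roughMaxNatural (n : ℕ) (Ω f : Rn n → ℝ) (x : Rn n) : ℝ≥0∞ :=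
  ⨆ (t : ℝ) (_ : 0 < t),
    ENNReal.ofReal |⨍ y in ball (0 : Rn n) t, Ω (‖y‖⁻¹ • y) * f (x - y)|

/-- The fractional spherical maximal operator `𝒮_β`. -/
def sphMax (n : ℕ) (β : ℝ) (f : Rn n → ℝ) (x : Rn n) : ℝ≥0∞ :=
  ⨆ (r : ℝ) (_ : 0 < r),
    ENNReal.ofReal (r ^ β) *
      ((MeasureTheory.Measure.hausdorffMeasure ((n : ℝ) - 1) (sphere x r))⁻¹ *
        ∫⁻ y in sphere x r, ENNReal.ofReal |f y|
          ∂(MeasureTheory.Measure.hausdorffMeasure ((n : ℝ) - 1)))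


/-- The measure `w^q dx`. -/
def wqMeasure (n : ℕ) (q : ℝ) (w : Rn n → ℝ) : Measure (Rn n) :=
  volume.withDensity fun x => ENNReal.ofReal (w x) ^ q

/-- Weak norm `‖g‖_{L^{q,∞}(w^q)}` for `ℝ≥0∞`-valued `g`. -/
def weakNormWq (n : ℕ) (q : ℝ) (w : Rn n → ℝ) (g : Rn n → ℝ≥0∞) : ℝ≥0∞ :=
  ⨆ (lam : ℝ) (_ : 0 < lam),
    ENNReal.ofReal lam * wqMeasure n q w {x | ENNReal.ofReal lam < g x} ^ (1 / q)

theorem unif_aux {E : Type*} [MetricSpace E] [MeasurableSpace E] [BorelSpace E]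
    [SecondCountableTopology E] (μ ν : Measure E) [IsFiniteMeasure μ] [IsFiniteMeasure ν]
    (S : Set E) (hS : IsCompact S) (hSne : S.Nonempty) (hμS : ∀ᵐ x ∂μ, x ∈ S)
    (hνS : ∀ᵐ x ∂ν, x ∈ S)
    (hμ : ∀ x ∈ S, ∀ y ∈ S, ∀ r, μ (ball x r) = μ (ball y r))
    (hν : ∀ x ∈ S, ∀ y ∈ S, ∀ r, ν (ball x r) = ν (ball y r))
    (hpos : ∀ x ∈ S, ∀ r > 0, 0 < ν (ball x r)) : ν univ • μ = μ univ • ν := by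
  obtain ⟨x0, hx0⟩ := hSne
  have : IsFiniteMeasure (ν univ • μ) := ⟨by
    simpa using ENNReal.mul_lt_top (measure_lt_top ν _) (measure_lt_top μ _)⟩
  have : IsFiniteMeasure (μ univ • ν) := ⟨by
    simpa using ENNReal.mul_lt_top (measure_lt_top μ _) (measure_lt_top ν _)⟩
  have hsing : ∀ r : ℝ, MeasurableSet {z : E × E | dist z.1 z.2 < r} := fun r =>
    (isOpen_lt (continuous_fst.dist continuous_snd) continuous_const).measurableSet
  -- the kernel
  let χ : ℝ → E × E → ℝ := fun r z => Set.indicator {z : E × E | dist z.1 z.2 < r} (fun _ => 1) z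
  have hχm : ∀ r, Measurable (χ r) := fun r => measurable_const.indicator (hsing r)
  have hχ0 : ∀ r z, 0 ≤ χ r z := fun r z => Set.indicator_nonneg (fun _ _ => zero_le_one) _
  have hχ1 : ∀ r z, χ r z ≤ 1 := fun r z => by
    simp only [χ, Set.indicator]; split_ifs <;> norm_num
  have hin1 : ∀ r x, x ∈ S → ∫ y, χ r (x, y) ∂ν = ν.real (ball x0 r) := by
    intro r x hx
    have : (fun y => χ r (x, y)) = (ball x r).indicator (fun _ => (1:ℝ)) := by
      ext y; simp [χ, Set.indicator, mem_ball, dist_comm]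
    rw [this, integral_indicator_const _ measurableSet_ball]
    simp [Measure.real, hν x hx x0 hx0 r]
  have hin2 : ∀ r y, y ∈ S → ∫ x, χ r (x, y) ∂μ = μ.real (ball x0 r) := by
    intro r x hx
    have : (fun y => χ r (y, x)) = (ball x r).indicator (fun _ => (1:ℝ)) := by
      ext y; simp [χ, Set.indicator, mem_ball]
    rw [this, integral_indicator_const _ measurableSet_ball]
    simp [Measure.real, hμ x hx x0 hx0 r]
  have hint : ∀ (g : E → ℝ) (r : ℝ), Continuous g → (∃ C, ∀ x, |g x| ≤ C) →
      Integrable (fun z : E × E => χ r z * g z.1) (μ.prod ν) ∧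
      Integrable (fun z : E × E => χ r z * g z.2) (μ.prod ν) := by
    rintro g r hg ⟨C, hC⟩
    constructor
    · refine Integrable.of_bound ((hχm r).mul (hg.measurable.comp measurable_fst)).aestronglyMeasurable C
        (ae_of_all _ fun z => ?_)
      rw [norm_mul, Real.norm_of_nonneg (hχ0 r z)]
      exact (mul_le_of_le_one_left (norm_nonneg _) (hχ1 r z)).trans (hC _)
    · refine Integrable.of_bound ((hχm r).mul (hg.measurable.comp measurable_snd)).aestronglyMeasurable C
        (ae_of_all _ fun z => ?_)
      rw [norm_mul, Real.norm_of_nonneg (hχ0 r z)]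
      exact (mul_le_of_le_one_left (norm_nonneg _) (hχ1 r z)).trans (hC _)
  have hI : ∀ (g : E → ℝ) (r : ℝ), Continuous g → (∃ C, ∀ x, |g x| ≤ C) →
      ∫ z, χ r z * g z.1 ∂(μ.prod ν) = ν.real (ball x0 r) * ∫ x, g x ∂μ := by
    intro g r hg hC
    rw [integral_prod _ (hint g r hg hC).1, ← integral_const_mul]
    refine integral_congr_ae ?_
    filter_upwards [hμS] with x hx
    rw [integral_mul_const, hin1 r x hx]
  have hJ : ∀ (g : E → ℝ) (r : ℝ), Continuous g → (∃ C, ∀ x, |g x| ≤ C) →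
      ∫ z, χ r z * g z.2 ∂(μ.prod ν) = μ.real (ball x0 r) * ∫ x, g x ∂ν := by
    intro g r hg hC
    rw [integral_prod_symm _ (hint g r hg hC).2, ← integral_const_mul]
    refine integral_congr_ae ?_
    filter_upwards [hνS] with x hx
    rw [integral_mul_const, hin2 r x hx]
  have h1 : ∀ r, ν.real (ball x0 r) * μ.real univ = μ.real (ball x0 r) * ν.real univ := by
    intro r
    have a := hI (fun _ => 1) r continuous_const ⟨1, by simp⟩
    have b := hJ (fun _ => 1) r continuous_const ⟨1, by simp⟩
    simp only [integral_const, smul_eq_mul, mul_one] at a b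
    rw [← a, ← b]
  refine ext_of_forall_integral_eq_of_IsFiniteMeasure fun f => ?_
  rw [integral_smul_measure, integral_smul_measure]
  change ν.real univ * _ = μ.real univ * _
  have hfC : ∃ C, ∀ x, |f x| ≤ C := ⟨‖f‖, fun x => f.norm_coe_le_norm x⟩
  have huc := hS.uniformContinuousOn_of_continuous f.continuous.continuousOn
  rw [Metric.uniformContinuousOn_iff] at huc
  -- the estimate
  have key : ∀ ε > 0, |ν.real univ * ∫ x, f x ∂μ - μ.real univ * ∫ x, f x ∂ν|
      ≤ ε * (μ.real univ * ν.real univ) := by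
    intro ε hε
    obtain ⟨r, hr, hf⟩ := huc ε hε
    have hk : 0 < ν.real (ball x0 r) :=
      ENNReal.toReal_pos (hpos x0 hx0 r hr).ne' (measure_ne_top _ _)
    have hd : |ν.real (ball x0 r) * ∫ x, f x ∂μ - μ.real (ball x0 r) * ∫ x, f x ∂ν|
        ≤ ε * (ν.real (ball x0 r) * μ.real univ) := by
      rw [← hI f r f.continuous hfC, ← hJ f r f.continuous hfC,
        ← integral_sub (hint f r f.continuous hfC).1 (hint f r f.continuous hfC).2]
      have h2 := hI (fun _ => 1) r continuous_const ⟨1, by simp⟩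
      simp only [integral_const, smul_eq_mul, mul_one] at h2
      rw [← h2, ← integral_const_mul, ← Real.norm_eq_abs]
      refine norm_integral_le_of_norm_le ?_ ?_
      · have := (hint (fun _ => 1) r continuous_const ⟨1, by simp⟩).1
        simp only [mul_one] at this
        exact this.const_mul ε
      · have e1 : ∀ᵐ z ∂(μ.prod ν), z.1 ∈ S := Measure.quasiMeasurePreserving_fst.ae hμS
        have e2 : ∀ᵐ z ∂(μ.prod ν), z.2 ∈ S := Measure.quasiMeasurePreserving_snd.ae hνS
        filter_upwards [e1, e2] with z hz1 hz2
        rw [← mul_sub, norm_mul, Real.norm_of_nonneg (hχ0 r z), mul_comm]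
        by_cases hz : dist z.1 z.2 < r
        · exact mul_le_mul_of_nonneg_right (hf _ hz1 _ hz2 hz).le (hχ0 _ _)
        · have : χ r z = 0 := by simp [χ, hz]
          simp [this]
    have : ν.real (ball x0 r) * |ν.real univ * ∫ x, f x ∂μ - μ.real univ * ∫ x, f x ∂ν|
      = ν.real univ * |ν.real (ball x0 r) * ∫ x, f x ∂μ - μ.real (ball x0 r) * ∫ x, f x ∂ν| := by
      have e1 := abs_mul (ν.real (ball x0 r))
        (ν.real univ * ∫ x, f x ∂μ - μ.real univ * ∫ x, f x ∂ν)
      have e2 := abs_mul (ν.real univ)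
        (ν.real (ball x0 r) * ∫ x, f x ∂μ - μ.real (ball x0 r) * ∫ x, f x ∂ν)
      rw [abs_of_pos hk] at e1
      rw [abs_of_nonneg measureReal_nonneg] at e2
      rw [← e1, ← e2]
      congr 1
      linear_combination (-∫ x, f x ∂ν) * h1 r
    refine le_of_mul_le_mul_left ?_ hk
    rw [this]
    calc _ ≤ ν.real univ * (ε * (ν.real (ball x0 r) * μ.real univ)) :=
          mul_le_mul_of_nonneg_left hd measureReal_nonneg
      _ = _ := by ring
  by_contra hne
  have hp : 0 < |ν.real univ * ∫ x, f x ∂μ - μ.real univ * ∫ x, f x ∂ν| :=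
    abs_pos.2 (sub_ne_zero.2 hne)
  set D := |ν.real univ * ∫ x, f x ∂μ - μ.real univ * ∫ x, f x ∂ν| with hD
  have hP : 0 ≤ μ.real univ * ν.real univ := by positivity
  have := key (D / (2 * (μ.real univ * ν.real univ + 1))) (by positivity)
  rw [div_mul_eq_mul_div, le_div_iff₀ (by positivity)] at this
  nlinarith

section
open scoped RealInnerProductSpace Pointwise

theorem hemi_finite {m : ℕ} {v : Rn (m + 1)} (hv : ‖v‖ = 1) :
    Measure.hausdorffMeasure (m : ℝ) {x : Rn (m + 1) | x ∈ sphere (0 : Rn (m+1)) 1 ∧ ⟪v, x⟫ ≤ 0} < ⊤ := by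
  have : Fact (Module.finrank ℝ (Rn (m + 1)) = m + 1) := ⟨by simp⟩
  have hv0 : v ≠ 0 := by rintro rfl; simp at hv
  have hfr : Module.finrank ℝ (ℝ ∙ v)ᗮ = m := Submodule.finrank_orthogonal_span_singleton hv0
  have hsub : {x : Rn (m + 1) | x ∈ sphere (0 : Rn (m+1)) 1 ∧ ⟪v, x⟫ ≤ 0} ⊆
      (fun w : (ℝ ∙ v)ᗮ => stereoInvFunAux v (w : Rn (m+1))) '' closedBall 0 2 := by
    rintro x ⟨hx, hx2⟩
    have hxv : x ≠ v := by
      rintro rfl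
      rw [real_inner_self_eq_norm_sq, hv] at hx2; norm_num at hx2
    refine ⟨stereoToFun v x, ?_, ?_⟩
    · rw [mem_closedBall_zero_iff, stereoToFun_apply, norm_smul]
      have h1 : ‖(ℝ ∙ v)ᗮ.orthogonalProjectionOnto x‖ ≤ 1 := by
        refine (Submodule.norm_orthogonalProjectionOnto_apply_le _ x).trans ?_
        simpa using hx.le
      have h2 : ‖2 / ((1:ℝ) - innerSL ℝ v x)‖ ≤ 2 := by
        have : (1:ℝ) ≤ 1 - innerSL ℝ v x := by
          have : innerSL ℝ v x = ⟪v, x⟫ := rfl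
          linarith
        rw [Real.norm_of_nonneg (by positivity), div_le_iff₀ (by positivity)]
        linarith
      nlinarith [norm_nonneg ((ℝ ∙ v)ᗮ.orthogonalProjectionOnto x)]
    · have := stereo_left_inv hv (x := ⟨x, hx⟩) hxv
      exact congrArg Subtype.val this
  refine (measure_mono hsub).trans_lt ?_
  have hcd : ContDiff ℝ 1 (fun w : (ℝ ∙ v)ᗮ => stereoInvFunAux v (w : Rn (m+1))) :=
    contDiff_stereoInvFunAux.comp (ℝ ∙ v)ᗮ.subtypeL.contDiff
  obtain ⟨K, hK⟩ := (hcd.locallyLipschitz.locallyLipschitzOn (s := closedBall 0 2)).exists_lipschitzOnWith_of_compact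
    (isCompact_closedBall _ _)
  refine (hK.hausdorffMeasure_image_le (Nat.cast_nonneg m)).trans_lt ?_
  refine ENNReal.mul_lt_top (ENNReal.rpow_lt_top_of_nonneg (Nat.cast_nonneg m) (by simp)) ?_
  have := isAddHaarMeasure_hausdorffMeasure (E := (ℝ ∙ v)ᗮ)
  rw [hfr] at this
  exact (isCompact_closedBall _ _).measure_lt_top

theorem sphere_pos_aux {m : ℕ} {v : Rn (m + 1)} (hv : ‖v‖ = 1) :
    0 < Measure.hausdorffMeasure (m : ℝ) (sphere (0 : Rn (m+1)) 1) := by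
  have : Fact (Module.finrank ℝ (Rn (m + 1)) = m + 1) := ⟨by simp⟩
  have hv0 : v ≠ 0 := by rintro rfl; simp at hv
  have hfr : Module.finrank ℝ (ℝ ∙ v)ᗮ = m := Submodule.finrank_orthogonal_span_singleton hv0
  have hsub : ball (0 : (ℝ ∙ v)ᗮ) 1 ⊆ (ℝ ∙ v)ᗮ.orthogonalProjectionOnto '' (sphere (0 : Rn (m+1)) 1) := by
    intro w hw
    rw [mem_ball_zero_iff] at hw
    have hvw : ⟪(w : Rn (m+1)), v⟫ = 0 := Submodule.mem_orthogonal_singleton_iff_inner_left.1 w.2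
    have hs : 0 ≤ 1 - ‖w‖ ^ 2 := by nlinarith [norm_nonneg w]
    refine ⟨(w : Rn (m+1)) + Real.sqrt (1 - ‖w‖^2) • v, ?_, ?_⟩
    · rw [mem_sphere_zero_iff_norm]
      have h2 : ‖(w : Rn (m+1)) + Real.sqrt (1 - ‖w‖^2) • v‖ ^ 2 = 1 := by
        rw [norm_add_sq_real, inner_smul_right, hvw, norm_smul, hv, mul_one, Real.norm_eq_abs, sq_abs,
          Real.sq_sqrt hs]
        simp
      have h3 := norm_nonneg ((w : Rn (m+1)) + Real.sqrt (1 - ‖w‖^2) • v)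
      nlinarith
    · rw [map_add, map_smul, Submodule.orthogonalProjectionOnto_mem_subspace_eq_self]
      have : (ℝ ∙ v)ᗮ.orthogonalProjectionOnto v = 0 :=
        Submodule.orthogonalProjectionOnto_orthogonal_apply_eq_zero (Submodule.mem_span_singleton_self v)
      rw [this]; simp
  have h1 := (ℝ ∙ v)ᗮ.lipschitzWith_orthogonalProjectionOnto.hausdorffMeasure_image_le
    (Nat.cast_nonneg m : (0:ℝ) ≤ m) (sphere (0 : Rn (m+1)) 1)
  have := isAddHaarMeasure_hausdorffMeasure (E := (ℝ ∙ v)ᗮ)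
  rw [hfr] at this
  have h2 : 0 < Measure.hausdorffMeasure (m : ℝ) (ball (0 : (ℝ ∙ v)ᗮ) 1) := measure_ball_pos _ _ one_pos
  have h3 := h2.trans_le ((measure_mono hsub).trans h1)
  simpa using h3

/-- polar surface measure -/
noncomputable def polarMeas (n : ℕ) : Measure (Rn n) :=
  (volume : Measure (Rn n)).toSphere.map Subtype.val

instance (n : ℕ) : IsFiniteMeasure (polarMeas n) := by
  unfold polarMeas; infer_instance

theorem polarMeas_apply {n : ℕ} {A : Set (Rn n)} (hA : MeasurableSet A) :
    polarMeas n A = n * volume (Ioo (0:ℝ) 1 • (A ∩ sphere (0 : Rn n) 1)) := by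
  rw [polarMeas, Measure.map_apply measurable_subtype_coe hA,
    Measure.toSphere_apply' _ (measurable_subtype_coe hA)]
  simp [Set.inter_comm]

theorem polarMeas_ae {n : ℕ} : ∀ᵐ x ∂polarMeas n, x ∈ sphere (0 : Rn n) 1 := by
  rw [ae_iff]
  change polarMeas n ((sphere (0 : Rn n) 1)ᶜ) = 0
  rw [polarMeas_apply isClosed_sphere.measurableSet.compl]
  simp

theorem polar_eq (n : ℕ) (hn : 2 ≤ n) : ∃ c : ℝ≥0∞, c ≠ ⊤ ∧ polarMeas n = c • sphereMeasure n := by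
  obtain ⟨m, rfl⟩ : ∃ m, n = m + 1 := ⟨n - 1, by omega⟩
  set v : Rn (m+1) := EuclideanSpace.single 0 1 with hvdef
  have hv : ‖v‖ = 1 := by simp [v]
  have hd : (((m + 1 : ℕ) : ℝ) - 1) = m := by push_cast; ring
  have hfin : sphereMeasure (m+1) univ < ⊤ := by
    rw [sphereMeasure, Measure.restrict_apply_univ, hd]
    have hsub : sphere (0 : Rn (m+1)) 1 ⊆ {x | x ∈ sphere (0 : Rn (m+1)) 1 ∧ ⟪v, x⟫ ≤ 0} ∪
        {x | x ∈ sphere (0 : Rn (m+1)) 1 ∧ ⟪-v, x⟫ ≤ 0} := by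
      intro x hx
      rcases le_total ⟪v, x⟫ 0 with h | h
      · exact Or.inl ⟨hx, h⟩
      · exact Or.inr ⟨hx, by rw [inner_neg_left]; linarith⟩
    refine (measure_mono hsub).trans_lt ((measure_union_le _ _).trans_lt ?_)
    exact ENNReal.add_lt_top.2 ⟨hemi_finite hv, hemi_finite (by rwa [norm_neg])⟩
  have hfin' : IsFiniteMeasure (sphereMeasure (m+1)) := ⟨hfin⟩
  have hpos : 0 < sphereMeasure (m+1) univ := by
    rw [sphereMeasure, Measure.restrict_apply_univ, hd]
    exact sphere_pos_aux hv
  have hiso : ∀ x ∈ sphere (0 : Rn (m+1)) 1, ∀ y ∈ sphere (0 : Rn (m+1)) 1,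
      ∃ L : Rn (m+1) ≃ₗᵢ[ℝ] Rn (m+1), L x = y := by
    intro x hx y hy
    rw [mem_sphere_zero_iff_norm] at hx hy
    exact ⟨_, Submodule.reflection_sub (hx.trans hy.symm)⟩
  have himg : ∀ (L : Rn (m+1) ≃ₗᵢ[ℝ] Rn (m+1)) (x : Rn (m+1)) r,
      L '' (ball x r ∩ sphere 0 1) = ball (L x) r ∩ sphere 0 1 := by
    intro L x r
    rw [image_inter L.injective]
    simp
  have key := unif_aux (sphereMeasure (m+1)) (polarMeas (m+1)) (sphere 0 1) (isCompact_sphere _ _)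
    ⟨v, by simpa using hv⟩ (ae_restrict_mem isClosed_sphere.measurableSet) polarMeas_ae ?_ ?_ ?_
  · refine ⟨polarMeas (m+1) univ / sphereMeasure (m+1) univ, ?_, ?_⟩
    · exact ENNReal.div_ne_top (measure_ne_top _ _) hpos.ne'
    · rw [ENNReal.div_eq_inv_mul, mul_smul, key, smul_smul, ENNReal.inv_mul_cancel hpos.ne' hfin.ne, one_smul]
  · intro x hx y hy r
    obtain ⟨L, rfl⟩ := hiso x hx y hy
    rw [sphereMeasure, Measure.restrict_apply measurableSet_ball, Measure.restrict_apply measurableSet_ball,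
      ← himg, L.isometry.hausdorffMeasure_image (Or.inr L.surjective)]
  · intro x hx y hy r
    obtain ⟨L, rfl⟩ := hiso x hx y hy
    rw [polarMeas_apply measurableSet_ball, polarMeas_apply measurableSet_ball, ← himg]
    congr 1
    have : Ioo (0:ℝ) 1 • (L '' (ball x r ∩ sphere 0 1)) = L '' (Ioo (0:ℝ) 1 • (ball x r ∩ sphere 0 1)) := by
      ext z
      simp only [Set.mem_smul, mem_image]
      constructor
      · rintro ⟨t, ht, _, ⟨w, hw, rfl⟩, rfl⟩
        exact ⟨t • w, ⟨t, ht, w, hw, rfl⟩, by simp⟩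
      · rintro ⟨_, ⟨t, ht, w, hw, rfl⟩, rfl⟩
        exact ⟨t, ht, L w, ⟨w, hw, rfl⟩, by simp⟩
    rw [this]
    have h := L.symm.measurePreserving.measure_preimage_equiv (f := L.symm.toHomeomorph.toMeasurableEquiv) (Ioo (0:ℝ) 1 • (ball x r ∩ sphere 0 1))
    rw [← h]
    congr 1
    exact (L.toEquiv.image_eq_preimage_symm _).symm
  · intro x hx r hr
    rw [polarMeas, Measure.map_apply measurable_subtype_coe measurableSet_ball]
    refine (isOpen_ball.preimage continuous_subtype_val).measure_pos _ ⟨⟨x, hx⟩, ?_⟩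
    simpa using hr

end

theorem polar_lint {n : ℕ} (hn : 2 ≤ n) {G : Rn n → ℝ≥0∞} (hG : Measurable G) :
    ∫⁻ y, G y = ∫⁻ θ, (∫⁻ r in Ioi (0:ℝ), ENNReal.ofReal (r ^ (n - 1)) * G (r • θ)) ∂polarMeas n := by
  have : Nonempty (Fin n) := ⟨⟨0, by omega⟩⟩
  have hmp := (volume : Measure (Rn n)).measurePreserving_homeomorphUnitSphereProd
  have hFm : Measurable (fun z : sphere (0 : Rn n) 1 × Ioi (0:ℝ) => G (z.2.1 • z.1.1)) :=
    hG.comp (((continuous_subtype_val.comp continuous_snd).smul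
      (continuous_subtype_val.comp continuous_fst)).measurable)
  have hin : Measurable (fun z : Rn n × ℝ => ENNReal.ofReal (z.2 ^ (n - 1)) * G (z.2 • z.1)) := by
    refine Measurable.mul (by fun_prop) (hG.comp (continuous_snd.smul continuous_fst).measurable)
  rw [polarMeas, lintegral_map hin.lintegral_prod_right' measurable_subtype_coe]
  have e1 : ∫⁻ y, G y = ∫⁻ y : ({0}ᶜ : Set (Rn n)), G y ∂(Measure.comap Subtype.val volume) := by
    rw [lintegral_subtype_comap (measurableSet_singleton _).compl, restrict_compl_singleton]
  rw [e1]
  have e2 := hmp.lintegral_comp hFm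
  rw [lintegral_prod _ hFm.aemeasurable] at e2
  have e3 : ∀ y : ({0}ᶜ : Set (Rn n)), G y =
      (fun z : sphere (0 : Rn n) 1 × Ioi (0:ℝ) => G (z.2.1 • z.1.1)) (homeomorphUnitSphereProd (Rn n) y) := by
    intro y
    have : ‖(y : Rn n)‖ ≠ 0 := norm_ne_zero_iff.2 y.2
    simp [smul_smul, this]
  rw [lintegral_congr e3, e2]
  refine lintegral_congr fun θ => ?_
  rw [Measure.volumeIoiPow, lintegral_withDensity_eq_lintegral_mul]
  · have := lintegral_subtype_comap (μ := (volume : Measure ℝ)) (measurableSet_Ioi (a := (0:ℝ)))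
      (fun r : ℝ => ENNReal.ofReal (r ^ (n - 1)) * G (r • (θ : Rn n)))
    rw [← this]
    simp
  · fun_prop
  · exact hFm.comp measurable_prodMk_left

/-- the kernel -/
noncomputable def kerK (n : ℕ) (α : ℝ) (Ω : Rn n → ℝ) (y : Rn n) : ℝ :=
  Ω (‖y‖⁻¹ • y) / ‖y‖ ^ ((n : ℝ) + 1 - α)

theorem kerK_meas {n : ℕ} {α : ℝ} {Ω : Rn n → ℝ} (hΩ : Measurable Ω) : Measurable (kerK n α Ω) := by
  unfold kerK
  exact (hΩ.comp (by fun_prop)).div (by fun_prop)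

theorem polar_bound {n : ℕ} (hn : 2 ≤ n) {α : ℝ} {Ω : Rn n → ℝ} (hΩ : Measurable Ω)
    {G : Rn n → ℝ≥0∞} (hG : Measurable G) (S : ℝ≥0∞)
    (hS : ∀ θ : Rn n, ‖θ‖ = 1 → ∫⁻ r in Ioi (0:ℝ), ENNReal.ofReal (r ^ (α - 2)) * G (r • θ) ≤ S) :
    ∫⁻ y, ‖kerK n α Ω y‖ₑ * G y ≤ (∫⁻ θ, ‖Ω θ‖ₑ ∂polarMeas n) * S := by
  rw [polar_lint hn (G := fun y => ‖kerK n α Ω y‖ₑ * G y) ((kerK_meas hΩ).enorm.mul hG), ← lintegral_mul_const _ hΩ.enorm]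
  refine lintegral_mono_ae ?_
  filter_upwards [polarMeas_ae] with θ hθ
  rw [mem_sphere_zero_iff_norm] at hθ
  calc _ = ∫⁻ r in Ioi (0:ℝ), ‖Ω θ‖ₑ * (ENNReal.ofReal (r ^ (α - 2)) * G (r • θ)) := by
        refine setLIntegral_congr_fun measurableSet_Ioi fun r hr => ?_
        have hr : 0 < r := hr
        have hnorm : ‖r • θ‖ = r := by rw [norm_smul, hθ, mul_one, Real.norm_of_nonneg hr.le]
        have hker : kerK n α Ω (r • θ) = Ω θ * r ^ (-((n:ℝ) + 1 - α)) := by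
          rw [kerK, hnorm, smul_smul, inv_mul_cancel₀ hr.ne', one_smul, Real.rpow_neg hr.le, div_eq_mul_inv]
        rw [hker, enorm_mul, Real.enorm_of_nonneg (Real.rpow_nonneg hr.le (-((n:ℝ) + 1 - α)))]
        have : ENNReal.ofReal (r ^ (α - 2)) = ENNReal.ofReal (r ^ (n - 1)) * ENNReal.ofReal (r ^ (-((n:ℝ) + 1 - α))) := by
          rw [← ENNReal.ofReal_mul (by positivity), ← Real.rpow_natCast, ← Real.rpow_add hr]
          congr 2
          rw [Nat.cast_sub (by omega)]; push_cast; ring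
        rw [this]; ring
    _ = ‖Ω θ‖ₑ * ∫⁻ r in Ioi (0:ℝ), ENNReal.ofReal (r ^ (α - 2)) * G (r • θ) := by
        rw [lintegral_const_mul]
        exact Measurable.mul (by fun_prop) (hG.comp (by fun_prop))
    _ ≤ _ := by gcongr; exact hS θ hθ

theorem kerK_cancel {n : ℕ} (hn : 2 ≤ n) {α : ℝ} {Ω : Rn n → ℝ} (hΩ : Measurable Ω)
    (h0 : ∫ θ, Ω θ ∂polarMeas n = 0) (φ : ℝ → ℝ) : ∫ y, kerK n α Ω y * φ ‖y‖ = 0 := by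
  have : Nonempty (Fin n) := ⟨⟨0, by omega⟩⟩
  have hmp := (volume : Measure (Rn n)).measurePreserving_homeomorphUnitSphereProd
  have e1 := hmp.integral_comp (Homeomorph.measurableEmbedding _)
    (fun z : sphere (0 : Rn n) 1 × Ioi (0:ℝ) => Ω z.1 * ((z.2.1 ^ ((n : ℝ) + 1 - α))⁻¹ * φ z.2.1))
  rw [integral_prod_mul (fun θ : sphere (0 : Rn n) 1 => Ω θ)
    (fun r : Ioi (0:ℝ) => ((r.1 ^ ((n : ℝ) + 1 - α))⁻¹ * φ r.1))] at e1
  rw [polarMeas, integral_map measurable_subtype_coe.aemeasurable hΩ.aestronglyMeasurable] at h0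
  rw [h0, zero_mul] at e1
  rw [← e1]
  have e2 : ∫ y, kerK n α Ω y * φ ‖y‖ = ∫ y : ({0}ᶜ : Set (Rn n)), kerK n α Ω y * φ ‖(y : Rn n)‖ ∂(Measure.comap Subtype.val volume) := by
    rw [integral_subtype_comap (measurableSet_singleton _).compl (fun y => kerK n α Ω y * φ ‖y‖), restrict_compl_singleton]
  rw [e2]
  refine integral_congr_ae (ae_of_all _ fun y => ?_)
  simp [kerK]
  ring

theorem gradNorm_eq {n : ℕ} (f : Rn n → ℝ) (y : Rn n) : gradNorm f y = ‖fderiv ℝ f y‖ := by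
  simp [gradNorm, gradient]

theorem gradNorm_cont {n : ℕ} {f : Rn n → ℝ} (hf : ContDiff ℝ 1 f) : Continuous (gradNorm f) := by
  have : gradNorm f = fun y => ‖fderiv ℝ f y‖ := funext (gradNorm_eq f)
  rw [this]
  exact (hf.continuous_fderiv one_ne_zero).norm

theorem seg_le {n : ℕ} {f : Rn n → ℝ} (hf : ContDiff ℝ 1 f) (a b : Rn n) :
    ‖f b - f a‖ₑ ≤ ‖b - a‖ₑ * ∫⁻ t in Ioo (0:ℝ) 1, ENNReal.ofReal (gradNorm f (a + t • (b - a))) := by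
  have hd : ∀ t ∈ uIcc (0:ℝ) 1, HasDerivAt (fun t : ℝ => f (a + t • (b - a)))
      (fderiv ℝ f (a + t • (b - a)) (b - a)) t := by
    intro t _
    have h1 : HasDerivAt (fun t : ℝ => a + t • (b - a)) (b - a) t := by
      simpa using ((hasDerivAt_id t).smul_const (b - a)).const_add a
    exact ((hf.differentiable one_ne_zero _).hasFDerivAt).comp_hasDerivAt t h1
  have hc : Continuous (fun t : ℝ => fderiv ℝ f (a + t • (b - a)) (b - a)) :=
    ((hf.continuous_fderiv one_ne_zero).comp (by fun_prop)).clm_apply continuous_const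
  have h := intervalIntegral.integral_eq_sub_of_hasDerivAt hd (hc.intervalIntegrable 0 1)
  simp only [one_smul, zero_smul, add_zero, add_sub_cancel] at h
  rw [← h, intervalIntegral.integral_of_le zero_le_one, ← restrict_Ioo_eq_restrict_Ioc]
  refine (enorm_integral_le_lintegral_enorm _).trans ?_
  rw [← lintegral_const_mul']
  · refine lintegral_mono fun t => ?_
    rw [gradNorm_eq, ← enorm_norm (fderiv ℝ f _ _), Real.enorm_of_nonneg (norm_nonneg _), ← ofReal_norm_eq_enorm (b - a),
      ← ENNReal.ofReal_mul (norm_nonneg _), mul_comm]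
    exact ENNReal.ofReal_le_ofReal (ContinuousLinearMap.le_opNorm _ _)
  · simp

/-- the one-dimensional estimate -/
theorem ray_est {n : ℕ} {δ : ℝ} (hδ : 0 < δ) {θ : Rn n} (hθ : ‖θ‖ = 1) {t : ℝ} (ht0 : 0 < t) (ht1 : t < 1)
    {R : ℝ} (hR : 0 < R) (y : Rn n) :
    ∫⁻ r in Ioi R, ENNReal.ofReal (r ^ (-1 - δ)) * indicator {r : ℝ | ‖y - (r * (1 - t)) • θ‖ < r * t} (fun _ => 1) r
      ≤ ENNReal.ofReal (4 + 4 / δ) * ENNReal.ofReal t * ENNReal.ofReal (R ^ (-δ)) := by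
  have hRδ : 0 < R ^ (-δ) := Real.rpow_pos_of_pos hR _
  rw [← ENNReal.ofReal_mul (by positivity), ← ENNReal.ofReal_mul (by positivity)]
  rcases le_or_gt (1/4) t with h | h
  · calc _ ≤ ∫⁻ r in Ioi R, ENNReal.ofReal (r ^ (-1 - δ)) := by
          refine lintegral_mono fun r => ?_
          refine mul_le_of_le_one_right' ?_
          exact Set.indicator_le_self' (fun _ _ => zero_le) r
      _ = ENNReal.ofReal (∫ r in Ioi R, r ^ (-1 - δ)) := by
          rw [ofReal_integral_eq_lintegral_ofReal (integrableOn_Ioi_rpow_of_lt (by linarith) hR)]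
          filter_upwards [ae_restrict_mem measurableSet_Ioi] with r hr
          exact Real.rpow_nonneg (hR.le.trans (le_of_lt hr)) _
      _ ≤ _ := by
          refine ENNReal.ofReal_le_ofReal ?_
          rw [integral_Ioi_rpow_of_lt (by linarith) hR]
          have : -R ^ (-1 - δ + 1) / (-1 - δ + 1) = R ^ (-δ) * (1 / δ) := by
            rw [show -1 - δ + 1 = -δ by ring]; field_simp
          rw [this, mul_comm]
          refine mul_le_mul_of_nonneg_right ?_ hRδ.le
          have : 1 / δ ≤ 4 / δ * t := by
            rw [div_mul_eq_mul_div]; gcongr; linarith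
          nlinarith
  · have hsub : ∀ r : ℝ, R < r → ‖y - (r * (1 - t)) • θ‖ < r * t → r ∈ Ioo ‖y‖ (‖y‖ / (1 - 2 * t)) := by
      intro r hr hy
      have hr0 : 0 < r := hR.trans hr
      have h1 := abs_norm_sub_norm_le y ((r * (1 - t)) • θ)
      have h2 : ‖(r * (1 - t)) • θ‖ = r * (1 - t) := by
        rw [norm_smul, hθ, mul_one, Real.norm_of_nonneg (mul_nonneg hr0.le (by linarith))]
      rw [h2, abs_le] at h1
      constructor
      · nlinarith
      · rw [lt_div_iff₀ (by linarith)]; nlinarith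
    by_cases hy0 : y = 0
    · have : ∀ r ∈ Ioi R, ENNReal.ofReal (r ^ (-1 - δ)) * indicator {r : ℝ | ‖y - (r * (1 - t)) • θ‖ < r * t} (fun _ => 1) r = 0 := by
        intro r hr
        have : ¬ (‖y - (r * (1 - t)) • θ‖ < r * t) := by
          intro h'
          have := hsub r hr h'
          simp [hy0] at this
        simp [this]
      rw [setLIntegral_congr_fun measurableSet_Ioi this]
      simp
    · have hs : 0 < ‖y‖ := norm_pos_iff.2 hy0
      calc _ ≤ ∫⁻ r in Ioi R, (Ioo ‖y‖ (‖y‖ / (1 - 2 * t))).indicator (fun _ => ENNReal.ofReal (R ^ (-δ) / ‖y‖)) r := by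
            refine setLIntegral_mono' measurableSet_Ioi fun r hr => ?_
            by_cases hr' : ‖y - (r * (1 - t)) • θ‖ < r * t
            · have hm := hsub r hr hr'
              have hr0 : 0 < r := hR.trans hr
              rw [Set.indicator_of_mem hm, Set.indicator_of_mem (show r ∈ {r : ℝ | ‖y - (r * (1 - t)) • θ‖ < r * t} from hr'), mul_one]
              refine ENNReal.ofReal_le_ofReal ?_
              rw [show -1 - δ = -δ - 1 by ring, Real.rpow_sub_one hr0.ne']
              have h1 : r ^ (-δ) ≤ R ^ (-δ) := Real.rpow_le_rpow_of_nonpos hR (le_of_lt hr) (by linarith)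
              have h2 : 0 ≤ r ^ (-δ) := by positivity
              have h3 := hm.1.le
              gcongr
            · simp [hr']
        _ ≤ ∫⁻ r, (Ioo ‖y‖ (‖y‖ / (1 - 2 * t))).indicator (fun _ => ENNReal.ofReal (R ^ (-δ) / ‖y‖)) r :=
            setLIntegral_le_lintegral _ _
        _ = ENNReal.ofReal (R ^ (-δ) / ‖y‖ * (‖y‖ / (1 - 2 * t) - ‖y‖)) := by
            rw [lintegral_indicator_const measurableSet_Ioo, Real.volume_Ioo, ENNReal.ofReal_mul (by positivity)]
        _ ≤ _ := by
            refine ENNReal.ofReal_le_ofReal ?_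
            have : R ^ (-δ) / ‖y‖ * (‖y‖ / (1 - 2 * t) - ‖y‖) = (2 * t / (1 - 2 * t)) * R ^ (-δ) := by
              have : 1 - 2 * t ≠ 0 := by linarith
              field_simp; ring
            rw [this]
            refine mul_le_mul_of_nonneg_right ?_ hRδ.le
            have h5 : 2 * t / (1 - 2 * t) ≤ 4 * t := by
              rw [div_le_iff₀ (by linarith)]; nlinarith
            have : 0 ≤ 4 / δ * t := by positivity
            nlinarith

theorem ball_subst {n : ℕ} {G : Rn n → ℝ≥0∞} {s : ℝ} (hs : 0 < s) (a : Rn n) :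
    ∫⁻ v in ball (0 : Rn n) 1, G (a + s • v) =
      ENNReal.ofReal (s ^ n)⁻¹ * ∫⁻ y, G y * indicator {y : Rn n | ‖y - a‖ < s} (fun _ => 1) y := by
  have h1 : ∫⁻ v in ball (0 : Rn n) 1, G (a + s • v) =
      ∫⁻ v, (fun y => G (a + y) * indicator {y : Rn n | ‖y‖ < s} (fun _ => 1) y) (s • v) := by
    rw [← lintegral_indicator measurableSet_ball]
    refine lintegral_congr fun v => ?_
    by_cases hv : ‖v‖ < 1
    · have : ‖s • v‖ < s := by rw [norm_smul, Real.norm_of_nonneg hs.le]; nlinarith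
      rw [indicator_of_mem (by simpa using hv)]
      simp [this]
    · have : ¬ ‖s • v‖ < s := by rw [norm_smul, Real.norm_of_nonneg hs.le]; nlinarith
      rw [indicator_of_notMem (by simpa using hv)]
      simp [this]
  rw [h1]
  have hemb : MeasurableEmbedding (fun v : Rn n => s • v) :=
    (Homeomorph.smulOfNeZero s hs.ne').measurableEmbedding
  have h2 := hemb.lintegral_map (μ := volume) (fun y => G (a + y) * indicator {y : Rn n | ‖y‖ < s} (fun _ => 1) y)
  rw [← h2, Measure.map_addHaar_smul _ hs.ne', lintegral_smul_measure]
  have h3 : |(s ^ Module.finrank ℝ (Rn n))⁻¹| = (s ^ n)⁻¹ := by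
    rw [finrank_euclideanSpace_fin, abs_of_nonneg (by positivity)]
  rw [h3, smul_eq_mul]
  congr 1
  rw [← lintegral_sub_right_eq_self _ a]
  refine lintegral_congr fun y => ?_
  simp [indicator]

set_option maxHeartbeats 400000 in
theorem tail_p {n : ℕ} {δ : ℝ} (hδ : 0 < δ) {θ : Rn n} (hθ : ‖θ‖ = 1) {t : ℝ} (ht0 : 0 < t) (ht1 : t < 1)
    {R : ℝ} (hR : 0 < R) {G : Rn n → ℝ≥0∞} (hG : Measurable G) :
    ∫⁻ r in Ioi R, ∫⁻ v in ball (0 : Rn n) 1,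
        ENNReal.ofReal (r ^ (-1 - δ)) * ENNReal.ofReal (r ^ n) * G (r • ((1 - t) • θ + t • v))
      ≤ ENNReal.ofReal (t ^ n)⁻¹ * (ENNReal.ofReal (4 + 4 / δ) * ENNReal.ofReal t * ENNReal.ofReal (R ^ (-δ)))
        * ∫⁻ y, G y := by
  have hset : MeasurableSet {z : ℝ × Rn n | ‖z.2 - (z.1 * (1 - t)) • θ‖ < z.1 * t} :=
    measurableSet_lt (by fun_prop) (by fun_prop)
  have hI : Measurable (fun z : ℝ × Rn n => indicator {r : ℝ | ‖z.2 - (r * (1 - t)) • θ‖ < r * t} (fun _ => (1:ℝ≥0∞)) z.1) := by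
    have : (fun z : ℝ × Rn n => indicator {r : ℝ | ‖z.2 - (r * (1 - t)) • θ‖ < r * t} (fun _ => (1:ℝ≥0∞)) z.1)
      = indicator {z : ℝ × Rn n | ‖z.2 - (z.1 * (1 - t)) • θ‖ < z.1 * t} (fun _ => 1) := by
      ext z; simp [indicator]
    rw [this]
    exact measurable_const.indicator hset
  calc _ = ∫⁻ r in Ioi R, ∫⁻ y, ENNReal.ofReal (t ^ n)⁻¹ * (G y * (ENNReal.ofReal (r ^ (-1 - δ)) *
        indicator {r : ℝ | ‖y - (r * (1 - t)) • θ‖ < r * t} (fun _ => 1) r)) := by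
        refine setLIntegral_congr_fun measurableSet_Ioi fun r hr => ?_
        have hr0 : 0 < r := hR.trans hr
        have e1 : ∀ v : Rn n, r • ((1 - t) • θ + t • v) = (r * (1 - t)) • θ + (r * t) • v := by
          intro v; rw [smul_add, smul_smul, smul_smul]
        simp only [e1]
        rw [lintegral_const_mul' _ _ (by finiteness), ball_subst (by positivity), ← lintegral_const_mul' _ _ (by finiteness),
          ← lintegral_const_mul' _ _ (by finiteness)]
        refine lintegral_congr fun y => ?_
        have e2 : ENNReal.ofReal (r ^ n) * ENNReal.ofReal ((r * t) ^ n)⁻¹ = ENNReal.ofReal (t ^ n)⁻¹ := by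
          rw [← ENNReal.ofReal_mul (by positivity)]
          congr 1
          rw [mul_pow]; field_simp
        have e3 : indicator {y : Rn n | ‖y - (r * (1 - t)) • θ‖ < r * t} (fun _ => (1:ℝ≥0∞)) y =
          indicator {r : ℝ | ‖y - (r * (1 - t)) • θ‖ < r * t} (fun _ => 1) r := by simp [indicator]
        rw [← e2, e3]
        ring
    _ = ∫⁻ y, ∫⁻ r in Ioi R, ENNReal.ofReal (t ^ n)⁻¹ * (G y * (ENNReal.ofReal (r ^ (-1 - δ)) *
        indicator {r : ℝ | ‖y - (r * (1 - t)) • θ‖ < r * t} (fun _ => 1) r)) := by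
        refine lintegral_lintegral_swap ?_
        refine Measurable.aemeasurable ?_
        refine measurable_const.mul ((hG.comp measurable_snd).mul (Measurable.mul (by fun_prop) hI))
    _ ≤ ∫⁻ y, ENNReal.ofReal (t ^ n)⁻¹ * (ENNReal.ofReal (4 + 4 / δ) * ENNReal.ofReal t * ENNReal.ofReal (R ^ (-δ)))
        * G y := by
        refine lintegral_mono fun y => ?_
        have hm1 : Measurable (fun r : ℝ => ENNReal.ofReal (r ^ (-1 - δ)) *
          indicator {r : ℝ | ‖y - (r * (1 - t)) • θ‖ < r * t} (fun _ => 1) r) :=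
          Measurable.mul (by fun_prop) (measurable_const.indicator (measurableSet_lt (by fun_prop) (by fun_prop)))
        have hre := ray_est hδ hθ ht0 ht1 hR y
        have hA : ENNReal.ofReal (t ^ n)⁻¹ ≠ ⊤ := ENNReal.ofReal_ne_top
        generalize ENNReal.ofReal (t ^ n)⁻¹ = A at hA ⊢
        rw [lintegral_const_mul' _ _ hA, lintegral_const_mul _ hm1]
        generalize ENNReal.ofReal (4 + 4 / δ) * ENNReal.ofReal t * ENNReal.ofReal (R ^ (-δ)) = B at hre ⊢
        rw [mul_assoc, mul_comm B]
        exact mul_le_mul_right (mul_le_mul_right hre _) _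
    _ = _ := lintegral_const_mul _ hG

theorem tail_fix {n : ℕ} {δ α p p' : ℝ} (hpp : p.HolderConjugate p') (hδ : 0 < δ) (hδe : δ = n / p - α) {θ : Rn n} (hθ : ‖θ‖ = 1) {t : ℝ} (ht0 : 0 < t) (ht1 : t < 1)
    {R : ℝ} (hR : 0 < R) {g : Rn n → ℝ≥0∞} (hg : Measurable g) (x : Rn n) :
    ∫⁻ r in Ioi R, ∫⁻ v in ball (0 : Rn n) 1,
        ENNReal.ofReal (r ^ (α - 1)) * g (x - r • ((1 - t) • θ + t • v))
      ≤ (ENNReal.ofReal (t ^ n)⁻¹ * (ENNReal.ofReal (4 + 4 / δ) * ENNReal.ofReal t * ENNReal.ofReal (R ^ (-δ)))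
        * ∫⁻ y, g y ^ p) ^ (1 / p) * (ENNReal.ofReal (1 / δ) * ENNReal.ofReal (R ^ (-δ)) * volume (ball (0 : Rn n) 1)) ^ (1 / p') := by
  have hp0 : 0 < p := hpp.pos
  have hp0' : 0 < p' := hpp.symm.pos
  set μ : Measure (ℝ × Rn n) := (volume.restrict (Ioi R)).prod (volume.restrict (ball (0 : Rn n) 1)) with hμ
  have hGm : Measurable (fun z : ℝ × Rn n => g (x - z.1 • ((1 - t) • θ + t • z.2))) :=
    hg.comp (by fun_prop)
  set F1 : ℝ × Rn n → ℝ≥0∞ := fun z => ENNReal.ofReal (z.1 ^ ((-1 - δ) / p)) * (ENNReal.ofReal (z.1 ^ (n / p)) * g (x - z.1 • ((1 - t) • θ + t • z.2))) with hF1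
  set F2 : ℝ × Rn n → ℝ≥0∞ := fun z => ENNReal.ofReal (z.1 ^ ((-1 - δ) / p')) with hF2
  have hF1m : Measurable F1 := Measurable.mul (by fun_prop) (Measurable.mul (by fun_prop) hGm)
  have hF2m : Measurable F2 := by fun_prop
  have key := ENNReal.lintegral_mul_le_Lp_mul_Lq μ hpp hF1m.aemeasurable hF2m.aemeasurable
  rw [hμ, lintegral_prod _ (hF1m.mul hF2m).aemeasurable, lintegral_prod _ (hF1m.pow_const p).aemeasurable, lintegral_prod _ (hF2m.pow_const p').aemeasurable] at key
  refine le_trans (le_of_eq ?_) (key.trans ?_)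
  · refine setLIntegral_congr_fun measurableSet_Ioi fun r hr => ?_
    have hr0 : 0 < r := hR.trans hr
    refine lintegral_congr fun v => ?_
    have : ENNReal.ofReal (r ^ (α - 1)) = ENNReal.ofReal (r ^ ((-1 - δ) / p)) * ENNReal.ofReal (r ^ (n / p)) * ENNReal.ofReal (r ^ ((-1 - δ) / p')) := by
      rw [← ENNReal.ofReal_mul (by positivity), ← ENNReal.ofReal_mul (by positivity), ← Real.rpow_add hr0, ← Real.rpow_add hr0]
      congr 2
      have h1 := hpp.inv_add_inv_eq_one
      have : (-1 - δ) / p + n / p + (-1 - δ) / p' = (-1 - δ) * (p⁻¹ + p'⁻¹) + n / p := by ring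
      rw [this, h1, hδe]; ring
    simp only [hF1, hF2, Pi.mul_apply, this]
    ring
  · gcongr
    · have := tail_p hδ hθ ht0 ht1 hR (G := fun y => g (x - y) ^ p) ((hg.comp (by fun_prop)).pow_const p)
      rw [lintegral_sub_left_eq_self (fun y => g y ^ p) x] at this
      refine le_trans (le_of_eq ?_) this
      refine setLIntegral_congr_fun measurableSet_Ioi fun r hr => ?_
      have hr0 : 0 < r := hR.trans hr
      refine lintegral_congr fun v => ?_
      simp only [hF1]
      rw [ENNReal.mul_rpow_of_nonneg _ _ hp0.le, ENNReal.mul_rpow_of_nonneg _ _ hp0.le, ENNReal.ofReal_rpow_of_pos (by positivity), ENNReal.ofReal_rpow_of_pos (by positivity),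
        ← Real.rpow_mul hr0.le, ← Real.rpow_mul hr0.le, div_mul_cancel₀ _ hp0.ne', div_mul_cancel₀ _ hp0.ne', Real.rpow_natCast, mul_assoc]
    · have : ∀ r ∈ Ioi R, (∫⁻ v in ball (0 : Rn n) 1, F2 (r, v) ^ p') = ENNReal.ofReal (r ^ (-1 - δ)) * volume (ball (0 : Rn n) 1) := by
        intro r hr
        have hr0 : 0 < r := hR.trans hr
        simp only [hF2]
        rw [setLIntegral_const, ENNReal.ofReal_rpow_of_pos (by positivity), ← Real.rpow_mul hr0.le, div_mul_cancel₀ _ hp0'.ne']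
      rw [setLIntegral_congr_fun measurableSet_Ioi this, lintegral_mul_const _ (by fun_prop)]
      gcongr
      rw [← ofReal_integral_eq_lintegral_ofReal (integrableOn_Ioi_rpow_of_lt (by linarith) hR), integral_Ioi_rpow_of_lt (by linarith) hR]
      · rw [← ENNReal.ofReal_mul (by positivity)]
        refine ENNReal.ofReal_le_ofReal (le_of_eq ?_)
        rw [show -1 - δ + 1 = -δ by ring]; field_simp
      · filter_upwards [ae_restrict_mem measurableSet_Ioi] with r hr
        exact Real.rpow_nonneg (hR.le.trans (le_of_lt hr)) _

theorem lint_rpow_lt_top {a : ℝ} (ha : -1 < a) : ∫⁻ t in Ioo (0:ℝ) 1, ENNReal.ofReal (t ^ a) < ⊤ := by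
  have h := intervalIntegral.intervalIntegrable_rpow' (a := 0) (b := 1) ha
  rw [intervalIntegrable_iff_integrableOn_Ioo_of_le zero_le_one] at h
  exact h.lintegral_lt_top

theorem tail_est {n : ℕ} {δ α p p' : ℝ} (hpp : p.HolderConjugate p') (hnp : (n : ℝ) ≤ p) (hδ : 0 < δ) (hδe : δ = n / p - α) :
    ∃ C : ℝ≥0∞, C ≠ ⊤ ∧ ∀ (θ : Rn n), ‖θ‖ = 1 → ∀ (R : ℝ), 0 < R → ∀ (g : Rn n → ℝ≥0∞), Measurable g → ∀ x : Rn n,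
    ∫⁻ t in Ioo (0:ℝ) 1, (∫⁻ r in Ioi R, ∫⁻ v in ball (0 : Rn n) 1,
        ENNReal.ofReal (r ^ (α - 1)) * g (x - r • ((1 - t) • θ + t • v)))
      ≤ C * ENNReal.ofReal (R ^ (-δ)) * (∫⁻ y, g y ^ p) ^ (1 / p) := by
  have hp0 : 0 < p := hpp.pos
  have hp0' : 0 < p' := hpp.symm.pos
  have hfin : ∫⁻ t in Ioo (0:ℝ) 1, ENNReal.ofReal (t ^ ((1 - n) / p)) < ⊤ := by
    refine lint_rpow_lt_top ?_
    rw [lt_div_iff₀ hp0]; linarith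
  refine ⟨ENNReal.ofReal (4 + 4 / δ) ^ (1 / p) * (ENNReal.ofReal (1 / δ) * volume (ball (0 : Rn n) 1)) ^ (1 / p') *
    ∫⁻ t in Ioo (0:ℝ) 1, ENNReal.ofReal (t ^ ((1 - n) / p)), ?_, ?_⟩
  · refine ENNReal.mul_ne_top (ENNReal.mul_ne_top ?_ ?_) hfin.ne
    · exact ENNReal.rpow_ne_top_of_nonneg (by positivity) ENNReal.ofReal_ne_top
    · exact ENNReal.rpow_ne_top_of_nonneg (by positivity) (ENNReal.mul_ne_top ENNReal.ofReal_ne_top measure_ball_lt_top.ne)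
  · intro θ hθ R hR g hg x
    calc _ ≤ ∫⁻ t in Ioo (0:ℝ) 1, (ENNReal.ofReal (4 + 4 / δ) ^ (1 / p) * (ENNReal.ofReal (1 / δ) * volume (ball (0 : Rn n) 1)) ^ (1 / p') *
            ENNReal.ofReal (R ^ (-δ)) * (∫⁻ y, g y ^ p) ^ (1 / p)) * ENNReal.ofReal (t ^ ((1 - n) / p)) := by
          refine setLIntegral_mono' measurableSet_Ioo fun t ht => ?_
          refine (tail_fix hpp hδ hδe hθ ht.1 ht.2 hR hg x).trans (le_of_eq ?_)
          have ht0 : 0 < t := ht.1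
          have i1 : 0 ≤ 1 / p := by positivity
          have i2 : 0 ≤ 1 / p' := by positivity
          have hRR : 0 < R ^ (-δ) := Real.rpow_pos_of_pos hR _
          have e0 : ENNReal.ofReal (R ^ (-δ)) = ENNReal.ofReal (R ^ (-δ)) ^ (1 / p) * ENNReal.ofReal (R ^ (-δ)) ^ (1 / p') := by
            rw [← ENNReal.rpow_add _ _ (by simpa using hRR) (by finiteness)]
            have := hpp.inv_add_inv_eq_one
            rw [one_div, one_div, this, ENNReal.rpow_one]
          have e1 : ENNReal.ofReal (t ^ ((1 - n) / p)) = ENNReal.ofReal (t ^ n)⁻¹ ^ (1 / p) * ENNReal.ofReal t ^ (1 / p) := by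
            rw [← ENNReal.mul_rpow_of_nonneg _ _ i1, ← ENNReal.ofReal_mul (by positivity), ENNReal.ofReal_rpow_of_pos (by positivity)]
            congr 1
            have : (t ^ n)⁻¹ * t = t ^ (1 - (n:ℝ)) := by
              rw [Real.rpow_sub ht0, Real.rpow_one, Real.rpow_natCast]; field_simp
            rw [this, ← Real.rpow_mul ht0.le]; congr 1; ring
          rw [e1]
          conv_rhs => rw [e0]
          simp only [ENNReal.mul_rpow_of_nonneg _ _ i1, ENNReal.mul_rpow_of_nonneg _ _ i2]
          ring
      _ = _ := by
          rw [lintegral_const_mul _ (by fun_prop)]; ring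

/-- normalised Lebesgue measure on the unit ball -/
noncomputable def nuB (n : ℕ) : Measure (Rn n) := (volume (ball (0 : Rn n) 1))⁻¹ • volume.restrict (ball (0 : Rn n) 1)

instance nuB_prob (n : ℕ) : IsProbabilityMeasure (nuB n) := by
  constructor
  rw [nuB, Measure.smul_apply, Measure.restrict_apply_univ, smul_eq_mul]
  exact ENNReal.inv_mul_cancel (measure_ball_pos _ _ one_pos).ne' measure_ball_lt_top.ne

/-- the average -/
noncomputable def cav {n : ℕ} (f : Rn n → ℝ) (x : Rn n) (r : ℝ) : ℝ := ∫ v, f (x - r • v) ∂nuB n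

theorem cav_meas {n : ℕ} {f : Rn n → ℝ} (hf : Continuous f) (x : Rn n) : Measurable (cav f x) := by
  have : StronglyMeasurable (fun z : ℝ × Rn n => f (x - z.1 • z.2)) :=
    (hf.comp (by fun_prop)).stronglyMeasurable
  exact (this.integral_prod_right (ν := nuB n)).measurable

theorem cav_bdd {n : ℕ} {f : Rn n → ℝ} {A : ℝ} (hA : ∀ x, |f x| ≤ A) (x : Rn n) (r : ℝ) : |cav f x r| ≤ A := by
  have := norm_integral_le_of_norm_le_const (μ := nuB n) (f := fun v => f (x - r • v)) (C := A) (Eventually.of_forall fun v => hA _)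
  simpa [cav] using this

theorem cav_diff {n : ℕ} {f : Rn n → ℝ} (hf : ContDiff ℝ 1 f) {A : ℝ} (hA : ∀ x, |f x| ≤ A) {θ : Rn n} (hθ : ‖θ‖ = 1) (x : Rn n) {r : ℝ} (hr : 0 < r) :
    ‖f (x - r • θ) - cav f x r‖ₑ ≤ (volume (ball (0 : Rn n) 1))⁻¹ * ∫⁻ v in ball (0 : Rn n) 1, ENNReal.ofReal (2 * r) *
      ∫⁻ t in Ioo (0:ℝ) 1, ENNReal.ofReal (gradNorm f (x - r • ((1 - t) • θ + t • v))) := by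
  have hint : Integrable (fun v => f (x - r • v)) (nuB n) :=
    Integrable.of_bound (hf.continuous.comp (by fun_prop)).aestronglyMeasurable A (Eventually.of_forall fun v => hA _)
  have e1 : f (x - r • θ) - cav f x r = ∫ v, (f (x - r • θ) - f (x - r • v)) ∂nuB n := by
    rw [integral_sub (integrable_const _) hint]; simp [cav]
  rw [e1]
  refine (enorm_integral_le_lintegral_enorm _).trans ?_
  rw [nuB, lintegral_smul_measure, smul_eq_mul]
  gcongr 1
  refine setLIntegral_mono' measurableSet_ball fun v hv => ?_
  have h := seg_le hf (x - r • θ) (x - r • v)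
  rw [enorm_sub_rev] at h
  have e2 : ∀ t : ℝ, x - r • θ + t • (x - r • v - (x - r • θ)) = x - r • ((1 - t) • θ + t • v) := by
    intro t; module
  simp only [e2] at h
  refine h.trans ?_
  gcongr 1
  rw [← ofReal_norm]
  refine ENNReal.ofReal_le_ofReal ?_
  have : x - r • v - (x - r • θ) = r • (θ - v) := by module
  rw [this, norm_smul, Real.norm_of_nonneg hr.le]
  have h3 := norm_sub_le θ v
  have h4 : ‖v‖ < 1 := by simpa using hv
  nlinarith

theorem tail_diff {n : ℕ} {δ α p p' : ℝ} (hpp : p.HolderConjugate p') (hnp : (n : ℝ) ≤ p) (hδ : 0 < δ) (hδe : δ = n / p - α) :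
    ∃ C : ℝ≥0∞, C ≠ ⊤ ∧ ∀ (θ : Rn n), ‖θ‖ = 1 → ∀ (R : ℝ), 0 < R → ∀ (f : Rn n → ℝ) (A : ℝ), ContDiff ℝ 1 f → (∀ x, |f x| ≤ A) → ∀ x : Rn n,
    ∫⁻ r in Ioi R, ENNReal.ofReal (r ^ (α - 2)) * ‖f (x - r • θ) - cav f x r‖ₑ
      ≤ C * ENNReal.ofReal (R ^ (-δ)) * lqNorm n p (fun y => ENNReal.ofReal (gradNorm f y)) := by
  obtain ⟨C, hC, H⟩ := tail_est (n := n) hpp hnp hδ hδe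
  refine ⟨(volume (ball (0 : Rn n) 1))⁻¹ * 2 * C, ENNReal.mul_ne_top (ENNReal.mul_ne_top (ENNReal.inv_ne_top.2 (measure_ball_pos _ _ one_pos).ne') (by simp)) hC, ?_⟩
  intro θ hθ R hR f A hf hA x
  have hgm : Measurable (fun y => ENNReal.ofReal (gradNorm f y)) := (gradNorm_cont hf).measurable.ennreal_ofReal
  set g : Rn n → ℝ≥0∞ := fun y => ENNReal.ofReal (gradNorm f y) with hg
  have h := H θ hθ R hR g hgm x
  set F : ℝ → Rn n → ℝ → ℝ≥0∞ := fun r v t => ENNReal.ofReal (r ^ (α - 1)) * g (x - r • ((1 - t) • θ + t • v)) with hF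
  have hFm : Measurable (fun z : (ℝ × Rn n) × ℝ => F z.1.1 z.1.2 z.2) := by
    refine Measurable.mul (by fun_prop) (hgm.comp (by fun_prop))
  have hFm2 : ∀ r, Measurable (fun z : Rn n × ℝ => F r z.1 z.2) := fun r =>
    Measurable.mul (by fun_prop) (hgm.comp (by fun_prop))
  have hFm3 : Measurable (fun z : ℝ × ℝ => ∫⁻ v in ball (0 : Rn n) 1, F z.1 v z.2) := by
    have : Measurable (fun z : (ℝ × ℝ) × Rn n => F z.1.1 z.2 z.1.2) :=
      Measurable.mul (by fun_prop) (hgm.comp (by fun_prop))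
    exact this.lintegral_prod_right'
  have hB : (volume (ball (0 : Rn n) 1))⁻¹ ≠ ⊤ := ENNReal.inv_ne_top.2 (measure_ball_pos _ _ one_pos).ne'
  calc _ ≤ ∫⁻ r in Ioi R, ((volume (ball (0 : Rn n) 1))⁻¹ * 2) * ∫⁻ v in ball (0 : Rn n) 1, ∫⁻ t in Ioo (0:ℝ) 1, F r v t := by
        refine setLIntegral_mono' measurableSet_Ioi fun r hr => ?_
        have hr0 : 0 < r := hR.trans hr
        refine (mul_le_mul_right (cav_diff hf hA hθ x hr0) _).trans (le_of_eq ?_)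
        have e : ENNReal.ofReal (r ^ (α - 2)) * ENNReal.ofReal (2 * r) = 2 * ENNReal.ofReal (r ^ (α - 1)) := by
          have : (2:ℝ≥0∞) = ENNReal.ofReal 2 := by simp
          rw [this, ← ENNReal.ofReal_mul (by positivity), ← ENNReal.ofReal_mul (by positivity)]
          congr 1
          rw [show α - 1 = (α - 2) + 1 by ring, Real.rpow_add_one hr0.ne']; ring
        rw [hF]
        simp only
        rw [lintegral_const_mul' _ _ ENNReal.ofReal_ne_top]
        have e3 : ∀ v : Rn n, (∫⁻ t in Ioo (0:ℝ) 1, ENNReal.ofReal (r ^ (α - 1)) * g (x - r • ((1 - t) • θ + t • v)))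
          = ENNReal.ofReal (r ^ (α - 1)) * ∫⁻ t in Ioo (0:ℝ) 1, g (x - r • ((1 - t) • θ + t • v)) :=
          fun v => lintegral_const_mul' _ _ ENNReal.ofReal_ne_top
        simp only [e3]
        rw [lintegral_const_mul' _ _ ENNReal.ofReal_ne_top, mul_left_comm, ← mul_assoc (ENNReal.ofReal (r ^ (α - 2))), e]
        ring
    _ = ((volume (ball (0 : Rn n) 1))⁻¹ * 2) * ∫⁻ r in Ioi R, ∫⁻ v in ball (0 : Rn n) 1, ∫⁻ t in Ioo (0:ℝ) 1, F r v t :=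
        lintegral_const_mul' _ _ (ENNReal.mul_ne_top hB (by simp))
    _ = ((volume (ball (0 : Rn n) 1))⁻¹ * 2) * ∫⁻ t in Ioo (0:ℝ) 1, ∫⁻ r in Ioi R, ∫⁻ v in ball (0 : Rn n) 1, F r v t := by
        congr 1
        have hsw : ∀ r : ℝ, (∫⁻ v in ball (0 : Rn n) 1, ∫⁻ t in Ioo (0:ℝ) 1, F r v t) = ∫⁻ t in Ioo (0:ℝ) 1, ∫⁻ v in ball (0 : Rn n) 1, F r v t :=
          fun r => lintegral_lintegral_swap (hFm2 r).aemeasurable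
        simp only [hsw]
        exact lintegral_lintegral_swap hFm3.aemeasurable
    _ ≤ ((volume (ball (0 : Rn n) 1))⁻¹ * 2) * (C * ENNReal.ofReal (R ^ (-δ)) * (∫⁻ y, g y ^ p) ^ (1 / p)) := by
        gcongr
    _ = _ := by rw [lqNorm]; ring

theorem lint_Ioi_lt_top {a c : ℝ} (ha : a < -1) (hc : 0 < c) : ∫⁻ t in Ioi c, ENNReal.ofReal (t ^ a) < ⊤ :=
  (integrableOn_Ioi_rpow_of_lt ha hc).lintegral_lt_top

theorem kerK_int {n : ℕ} (hn : 2 ≤ n) {α : ℝ} (hα0 : 0 < α) (hα1 : α < 1) {Ω : Rn n → ℝ} (hΩ : Measurable Ω)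
    (hW : (∫⁻ θ, ‖Ω θ‖ₑ ∂polarMeas n) ≠ ⊤) {H : Rn n → ℝ} (hH : Measurable H) {A B : ℝ}
    (hA : ∀ y, |H y| ≤ A * ‖y‖) (hB : ∀ y, |H y| ≤ B) : Integrable (fun y => kerK n α Ω y * H y) := by
  refine ⟨((kerK_meas hΩ).mul hH).aestronglyMeasurable, ?_⟩
  rw [HasFiniteIntegral]
  simp only [enorm_mul]
  have hfin : ENNReal.ofReal A * (∫⁻ t in Ioo (0:ℝ) 1, ENNReal.ofReal (t ^ (α - 1))) + ENNReal.ofReal B * (∫⁻ t in Ioi (1/2 : ℝ), ENNReal.ofReal (t ^ (α - 2))) < ⊤ := by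
    refine ENNReal.add_lt_top.2 ⟨ENNReal.mul_lt_top (by simp) (lint_rpow_lt_top (by linarith)), ENNReal.mul_lt_top (by simp) (lint_Ioi_lt_top (by linarith) (by norm_num))⟩
  refine (polar_bound hn hΩ hH.enorm _ ?_).trans_lt (ENNReal.mul_lt_top hW.lt_top hfin)
  intro θ hθ
  have hsub : Ioi (0:ℝ) ⊆ Ioo 0 1 ∪ Ioi (1/2) := by
    intro r hr
    rcases lt_or_ge r 1 with h | h
    · exact Or.inl ⟨hr, h⟩
    · exact Or.inr (by simp only [mem_Ioi]; linarith)
  refine (lintegral_mono_set hsub).trans ((lintegral_union_le _ _ _).trans ?_)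
  gcongr
  · rw [← lintegral_const_mul' _ _ (by simp)]
    refine setLIntegral_mono' measurableSet_Ioo fun r hr => ?_
    have hr0 : 0 < r := hr.1
    have h := hA (r • θ)
    rw [norm_smul, hθ, mul_one, Real.norm_of_nonneg hr0.le] at h
    have hA0 : 0 ≤ A := by
      have := (abs_nonneg _).trans h
      exact nonneg_of_mul_nonneg_left this hr0
    rw [← ofReal_norm, Real.norm_eq_abs, ← ENNReal.ofReal_mul (by positivity), ← ENNReal.ofReal_mul hA0]
    refine ENNReal.ofReal_le_ofReal ?_
    rw [show α - 1 = (α - 2) + 1 by ring, Real.rpow_add_one hr0.ne']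
    have : 0 < r ^ (α - 2) := by positivity
    nlinarith
  · rw [← lintegral_const_mul' _ _ (by simp)]
    refine setLIntegral_mono' measurableSet_Ioi fun r hr => ?_
    rw [mul_comm]
    gcongr
    rw [← ofReal_norm]
    exact ENNReal.ofReal_le_ofReal (hB _)

theorem rough_eq {n : ℕ} (hn : 2 ≤ n) {α : ℝ} (hα0 : 0 < α) (hα1 : α < 1) {Ω : Rn n → ℝ} (hΩ : Measurable Ω)
    (hW : (∫⁻ θ, ‖Ω θ‖ₑ ∂polarMeas n) ≠ ⊤) (h0 : ∫ θ, Ω θ ∂polarMeas n = 0) {f : Rn n → ℝ} (hf : Continuous f)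
    {A L : ℝ} (hA : ∀ x, |f x| ≤ A) (hL : ∀ x y, |f (x - y) - f x| ≤ L * ‖y‖) (x : Rn n) {φ : ℝ → ℝ} (hφ : Measurable φ)
    (hφA : ∀ r, |φ r| ≤ A) {R : ℝ} (hR : 0 < R) (hφR : ∀ r ≤ R, φ r = f x) :
    roughOp n α Ω f x = ∫ y, kerK n α Ω y * (f (x - y) - φ ‖y‖) := by
  have hA0 : 0 ≤ A := (abs_nonneg _).trans (hA x)
  have hHm : Measurable (fun y => f (x - y) - φ ‖y‖) :=
    (hf.measurable.comp (by fun_prop)).sub (hφ.comp measurable_norm)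
  have hHB : ∀ y, |f (x - y) - φ ‖y‖| ≤ 2 * A := fun y => by
    have := abs_sub (f (x - y)) (φ ‖y‖)
    have := hA (x - y); have := hφA ‖y‖; linarith
  have hset : ∀ ε : ℝ, MeasurableSet {y : Rn n | ε < ‖y‖} := fun ε => measurableSet_lt measurable_const measurable_norm
  have hI : Integrable (fun y => kerK n α Ω y * (f (x - y) - φ ‖y‖)) := by
    refine kerK_int hn hα0 hα1 hΩ hW hHm (A := |L| + 2 * A / R) (fun y => ?_) hHB
    rcases le_or_gt ‖y‖ R with h | h
    · rw [hφR _ h]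
      have h1 := hL x y
      have h2 : 0 ≤ 2 * A / R * ‖y‖ := by positivity
      have h3 := mul_le_mul_of_nonneg_right (le_abs_self L) (norm_nonneg y)
      linarith
    · have h1 := hHB y
      have h2 : 2 * A ≤ 2 * A / R * ‖y‖ := by
        rw [div_mul_eq_mul_div, le_div_iff₀ hR]; gcongr
      have h3 := mul_nonneg (abs_nonneg L) (norm_nonneg y)
      linarith
  have hbig : ∀ (ε : ℝ), 0 < ε → ∀ H : Rn n → ℝ, Measurable H → (∀ y, |H y| ≤ 2 * A) →
      Integrable (fun y => kerK n α Ω y * indicator {y : Rn n | ε < ‖y‖} H y) := by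
    intro ε hε H hH hHA
    refine kerK_int hn hα0 hα1 hΩ hW (hH.indicator (hset ε)) (A := 2 * A / ε) (B := 2 * A) (fun y => ?_) (fun y => ?_)
    · by_cases hy : ε < ‖y‖
      · rw [indicator_of_mem (by exact hy)]
        refine (hHA y).trans ?_
        rw [div_mul_eq_mul_div, le_div_iff₀ hε]; gcongr
      · rw [indicator_of_notMem (by exact hy), abs_zero]; positivity
    · by_cases hy : ε < ‖y‖
      · rw [indicator_of_mem (by exact hy)]; exact hHA y
      · rw [indicator_of_notMem (by exact hy), abs_zero]; positivity
  have htr : ∀ ε : ℝ, 0 < ε → roughOpTrunc n α Ω f x ε = ∫ y, kerK n α Ω y * indicator {y : Rn n | ε < ‖y‖} (fun y => f (x - y) - φ ‖y‖) y := by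
    intro ε hε
    have e1 : roughOpTrunc n α Ω f x ε = ∫ y, kerK n α Ω y * indicator {y : Rn n | ε < ‖y‖} (fun y => f (x - y)) y := by
      rw [roughOpTrunc, ← integral_indicator (hset ε)]
      refine integral_congr_ae (Eventually.of_forall fun y => ?_)
      by_cases hy : ε < ‖y‖
      · simp [indicator, hy, kerK]
      · simp [indicator, hy]
    have e2 := kerK_cancel (α := α) hn hΩ h0 (fun r => indicator {r : ℝ | ε < r} φ r)
    have e3 : ∫ y, kerK n α Ω y * indicator {y : Rn n | ε < ‖y‖} (fun y => φ ‖y‖) y = 0 := by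
      rw [← e2]
      refine integral_congr_ae (Eventually.of_forall fun y => ?_)
      simp [indicator]
    have e4 : ∀ y, kerK n α Ω y * indicator {y : Rn n | ε < ‖y‖} (fun y => f (x - y) - φ ‖y‖) y =
      kerK n α Ω y * indicator {y : Rn n | ε < ‖y‖} (fun y => f (x - y)) y - kerK n α Ω y * indicator {y : Rn n | ε < ‖y‖} (fun y => φ ‖y‖) y := by
      intro y
      by_cases hy : ε < ‖y‖
      · simp [indicator, hy, mul_sub]
      · simp [indicator, hy]
    simp only [e4]
    rw [integral_sub (hbig ε hε (fun y => f (x - y)) (hf.measurable.comp (by fun_prop)) (fun y => by have := hA (x - y); linarith))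
      (hbig ε hε (fun y => φ ‖y‖) (hφ.comp measurable_norm) (fun y => by have := hφA ‖y‖; linarith)), e3, sub_zero, e1]
  have hlim : Tendsto (roughOpTrunc n α Ω f x) (𝓝[>] (0:ℝ)) (𝓝 (∫ y, kerK n α Ω y * (f (x - y) - φ ‖y‖))) := by
    have h1 : Tendsto (fun ε : ℝ => ∫ y, kerK n α Ω y * indicator {y : Rn n | ε < ‖y‖} (fun y => f (x - y) - φ ‖y‖) y) (𝓝[>] (0:ℝ))
        (𝓝 (∫ y, kerK n α Ω y * (f (x - y) - φ ‖y‖))) := by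
      refine tendsto_integral_filter_of_dominated_convergence (fun y => ‖kerK n α Ω y * (f (x - y) - φ ‖y‖)‖) ?_ ?_ hI.norm ?_
      · filter_upwards with ε
        exact ((kerK_meas hΩ).mul (hHm.indicator (hset ε))).aestronglyMeasurable
      · filter_upwards with ε
        filter_upwards with y
        rw [norm_mul, norm_mul]
        gcongr
        exact norm_indicator_le_norm_self _ _
      · filter_upwards with y
        refine tendsto_const_nhds.congr' ?_
        by_cases hy : y = 0
        · have : f (x - y) - φ ‖y‖ = 0 := by
            rw [hφR _ (by simp [hy, hR.le])]; simp [hy]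
          filter_upwards with ε
          simp only [indicator, this]; simp
        · have : 0 < ‖y‖ := norm_pos_iff.2 hy
          filter_upwards [mem_nhdsWithin_of_mem_nhds (Iio_mem_nhds this)] with ε hε
          rw [indicator_of_mem (by exact hε)]
    refine h1.congr' ?_
    filter_upwards [self_mem_nhdsWithin] with ε hε
    exact (htr ε hε).symm
  exact hlim.limUnder_eq

theorem rough_meas {n : ℕ} (hn : 2 ≤ n) {α : ℝ} (hα0 : 0 < α) (hα1 : α < 1) {Ω : Rn n → ℝ} (hΩ : Measurable Ω)
    (hW : (∫⁻ θ, ‖Ω θ‖ₑ ∂polarMeas n) ≠ ⊤) (h0 : ∫ θ, Ω θ ∂polarMeas n = 0) {f : Rn n → ℝ} (hf : Continuous f)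
    {A L : ℝ} (hA : ∀ x, |f x| ≤ A) (hL : ∀ x y, |f (x - y) - f x| ≤ L * ‖y‖) : Measurable (roughOp n α Ω f) := by
  have e : roughOp n α Ω f = fun x => ∫ y, kerK n α Ω y * (f (x - y) - indicator (Iic (1:ℝ)) (fun _ => f x) ‖y‖) := by
    ext x
    refine rough_eq hn hα0 hα1 hΩ hW h0 hf hA hL x (measurable_const.indicator measurableSet_Iic) (fun r => ?_) one_pos (fun r hr => ?_)
    · by_cases h : r ≤ 1
      · simp [indicator, h, hA x]
      · simp [indicator, h, (abs_nonneg _).trans (hA x)]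
    · simp [indicator, hr]
  rw [e]
  have : Measurable (fun z : Rn n × Rn n => kerK n α Ω z.2 * (f (z.1 - z.2) - indicator (Iic (1:ℝ)) (fun _ => f z.1) ‖z.2‖)) := by
    refine ((kerK_meas hΩ).comp measurable_snd).mul ((hf.measurable.comp (by fun_prop)).sub ?_)
    have e2 : (fun z : Rn n × Rn n => indicator (Iic (1:ℝ)) (fun _ => f z.1) ‖z.2‖) = indicator {z : Rn n × Rn n | ‖z.2‖ ≤ 1} (fun z => f z.1) := by
      ext z; simp [indicator]
    rw [e2]
    exact (hf.measurable.comp measurable_fst).indicator (measurableSet_le (by fun_prop) measurable_const)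
  exact this.stronglyMeasurable.integral_prod_right.measurable

/-- the local operator -/
noncomputable def locOp (n : ℕ) (α : ℝ) (Ω : Rn n → ℝ) (R : ℝ) (g : Rn n → ℝ≥0∞) (x : Rn n) : ℝ≥0∞ :=
  ∫⁻ y in closedBall (0 : Rn n) R, ‖kerK n α Ω y‖ₑ * ‖y‖ₑ * ∫⁻ t in Ioo (0:ℝ) 1, g (x - t • y)

theorem rough_le {n : ℕ} (hn : 2 ≤ n) {α : ℝ} (hα0 : 0 < α) (hα1 : α < 1) {Ω : Rn n → ℝ} (hΩ : Measurable Ω)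
    (hW : (∫⁻ θ, ‖Ω θ‖ₑ ∂polarMeas n) ≠ ⊤) (h0 : ∫ θ, Ω θ ∂polarMeas n = 0)
    {δ p p' : ℝ} (hpp : p.HolderConjugate p') (hnp : (n : ℝ) ≤ p) (hδ : 0 < δ) (hδe : δ = n / p - α) :
    ∃ C : ℝ≥0∞, C ≠ ⊤ ∧ ∀ (R : ℝ), 0 < R → ∀ (f : Rn n → ℝ) (A L : ℝ), ContDiff ℝ 1 f → (∀ x, |f x| ≤ A) →
      (∀ x y, |f (x - y) - f x| ≤ L * ‖y‖) → ∀ x : Rn n,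
      ‖roughOp n α Ω f x‖ₑ ≤ locOp n α Ω R (fun y => ENNReal.ofReal (gradNorm f y)) x +
        C * ENNReal.ofReal (R ^ (-δ)) * lqNorm n p (fun y => ENNReal.ofReal (gradNorm f y)) := by
  obtain ⟨C, hC, H⟩ := tail_diff (n := n) hpp hnp hδ hδe
  refine ⟨(∫⁻ θ, ‖Ω θ‖ₑ ∂polarMeas n) * C, ENNReal.mul_ne_top hW hC, ?_⟩
  intro R hR f A L hf hA hL x
  set φ : ℝ → ℝ := fun r => if r ≤ R then f x else cav f x r with hφ
  have hφm : Measurable φ := Measurable.ite measurableSet_Iic measurable_const (cav_meas hf.continuous x)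
  rw [rough_eq hn hα0 hα1 hΩ hW h0 hf.continuous hA hL x hφm (fun r => ?_) hR (fun r hr => ?_)]
  rotate_left
  · simp only [hφ]; split_ifs
    · exact hA x
    · exact cav_bdd hA x r
  · simp [hφ, hr]
  refine (enorm_integral_le_lintegral_enorm _).trans ?_
  rw [← lintegral_add_compl _ (measurableSet_closedBall (x := (0 : Rn n)) (ε := R))]
  gcongr ?_ + ?_
  · rw [locOp]
    refine setLIntegral_mono' measurableSet_closedBall fun y hy => ?_
    have hy' : ‖y‖ ≤ R := by simpa using hy
    simp only [hφ, hy', if_true]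
    rw [enorm_mul, mul_assoc]
    gcongr
    have := seg_le hf x (x - y)
    have e : ∀ t : ℝ, x + t • (x - y - x) = x - t • y := fun t => by module
    simp only [e] at this
    simpa using this
  · have hm : Measurable (fun y : Rn n => indicator (Ioi R) (fun _ => ‖f (x - y) - cav f x ‖y‖‖ₑ) ‖y‖) := by
      have e2 : (fun y : Rn n => indicator (Ioi R) (fun _ => ‖f (x - y) - cav f x ‖y‖‖ₑ) ‖y‖) = indicator {y : Rn n | R < ‖y‖} (fun y => ‖f (x - y) - cav f x ‖y‖‖ₑ) := by
        ext y; simp [indicator]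
      rw [e2]
      exact ((hf.continuous.measurable.comp (by fun_prop)).sub ((cav_meas hf.continuous x).comp measurable_norm)).enorm.indicator (measurableSet_lt measurable_const (by fun_prop))
    have hb := polar_bound (α := α) hn hΩ hm (C * ENNReal.ofReal (R ^ (-δ)) * lqNorm n p (fun y => ENNReal.ofReal (gradNorm f y))) ?_
    · refine le_trans ?_ (hb.trans (le_of_eq (by ring)))
      rw [← lintegral_indicator measurableSet_closedBall.compl]
      refine lintegral_mono fun y => ?_
      by_cases hy : R < ‖y‖
      · have : y ∈ (closedBall (0 : Rn n) R)ᶜ := by simpa using hy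
        rw [indicator_of_mem this]
        have h2 : ¬ ‖y‖ ≤ R := not_le.2 hy
        simp only [hφ, h2, if_false, enorm_mul]
        simp [indicator, hy]
      · have : y ∉ (closedBall (0 : Rn n) R)ᶜ := by simpa using hy
        rw [indicator_of_notMem this]
        exact zero_le
    · intro θ hθ
      refine le_trans (le_of_eq ?_) (H θ hθ R hR f A hf hA x)
      have hs : Ioi R ⊆ Ioi (0:ℝ) := Ioi_subset_Ioi hR.le
      rw [← lintegral_indicator measurableSet_Ioi, ← lintegral_indicator measurableSet_Ioi]
      refine lintegral_congr fun r => ?_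
      by_cases hr : R < r
      · have hr0 : 0 < r := hR.trans hr
        have hnorm : ‖r • θ‖ = r := by rw [norm_smul, hθ, mul_one, Real.norm_of_nonneg hr0.le]
        simp [indicator, hr, hr0, hnorm]
      · by_cases hr0 : 0 < r
        · have hnorm : ‖r • θ‖ = r := by rw [norm_smul, hθ, mul_one, Real.norm_of_nonneg hr0.le]
          simp [indicator, hr, hnorm]
        · simp [indicator, hr, hr0]

theorem lint_Ioc_rpow {a R : ℝ} (ha : -1 < a) (hR : 0 ≤ R) :
    ∫⁻ r in Ioc 0 R, ENNReal.ofReal (r ^ a) = ENNReal.ofReal (R ^ (a + 1) / (a + 1)) := by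
  have h1 := intervalIntegral.intervalIntegrable_rpow' (a := 0) (b := R) ha
  rw [intervalIntegrable_iff_integrableOn_Ioc_of_le hR] at h1
  rw [← ofReal_integral_eq_lintegral_ofReal h1, ← intervalIntegral.integral_of_le hR, integral_rpow (Or.inl ha),
    Real.zero_rpow (by linarith), sub_zero]
  filter_upwards [ae_restrict_mem measurableSet_Ioc] with r hr
  exact Real.rpow_nonneg hr.1.le _

theorem interp {X : Type*} [MeasurableSpace X] {μ : Measure X} [SFinite μ] {h g : X → ℝ} (hh : Measurable h) (hg : Measurable g)
    (hh0 : ∀ x, 0 ≤ h x) (hg0 : ∀ x, 0 ≤ g x) {p q κ : ℝ} (hp : 1 < p) (hq : 0 < q) (hκ : 0 < κ)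
    (H : ∀ l : ℝ, 0 < l → μ {x | l < h x} ≤ ENNReal.ofReal (κ * l ^ (q / p))⁻¹ *
      ∫⁻ x in {x | κ * l ^ (q / p) < g x}, ENNReal.ofReal (g x) ∂μ) :
    ∫⁻ x, ENNReal.ofReal (h x ^ q) ∂μ ≤ ENNReal.ofReal (κ ^ (-p) * (p / (p - 1))) * ∫⁻ x, ENNReal.ofReal (g x ^ p) ∂μ := by
  have hp0 : 0 < p := by linarith
  have hp1 : 0 < p - 1 := by linarith
  have hqp : 0 < q - q / p := by
    have : q / p < q := div_lt_self hq hp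
    linarith
  have hqp0 : 0 < q / p := by positivity
  rw [lintegral_rpow_eq_lintegral_meas_lt_mul μ (Eventually.of_forall hh0) hh.aemeasurable hq]
  have hset : MeasurableSet {z : ℝ × X | κ * z.1 ^ (q / p) < g z.2} :=
    measurableSet_lt (by fun_prop) (hg.comp measurable_snd)
  have hF : Measurable (fun z : ℝ × X => ENNReal.ofReal (z.1 ^ (q - 1 - q / p)) * indicator {z : ℝ × X | κ * z.1 ^ (q / p) < g z.2} (fun z => ENNReal.ofReal (g z.2)) z) :=
    Measurable.mul (by fun_prop) ((hg.comp measurable_snd).ennreal_ofReal.indicator hset)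
  calc _ ≤ ENNReal.ofReal q * ∫⁻ l in Ioi (0:ℝ), ∫⁻ x, ENNReal.ofReal κ⁻¹ * (ENNReal.ofReal (l ^ (q - 1 - q / p)) * indicator {z : ℝ × X | κ * z.1 ^ (q / p) < g z.2} (fun z => ENNReal.ofReal (g z.2)) (l, x)) ∂μ := by
        gcongr ENNReal.ofReal q * ?_
        refine setLIntegral_mono' measurableSet_Ioi fun l hl => ?_
        have hl : 0 < l := hl
        refine (mul_le_mul_left (H l hl) _).trans (le_of_eq ?_)
        rw [← lintegral_indicator (measurableSet_lt measurable_const hg), lintegral_const_mul' _ _ (by simp), lintegral_const_mul' _ _ (by simp)]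
        have e1 : ENNReal.ofReal (κ * l ^ (q / p))⁻¹ * ENNReal.ofReal (l ^ (q - 1)) = ENNReal.ofReal κ⁻¹ * ENNReal.ofReal (l ^ (q - 1 - q / p)) := by
          rw [← ENNReal.ofReal_mul (by positivity), ← ENNReal.ofReal_mul (by positivity)]
          congr 1
          rw [Real.rpow_sub hl (q - 1)]
          have : 0 < l ^ (q / p) := by positivity
          field_simp
        rw [mul_right_comm, e1, mul_assoc]
        congr 1
    _ = ENNReal.ofReal q * ∫⁻ x, (∫⁻ l in Ioi (0:ℝ), ENNReal.ofReal κ⁻¹ * (ENNReal.ofReal (l ^ (q - 1 - q / p)) * indicator {z : ℝ × X | κ * z.1 ^ (q / p) < g z.2} (fun z => ENNReal.ofReal (g z.2)) (l, x))) ∂μ := by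
        congr 1
        exact lintegral_lintegral_swap (hF.const_mul _).aemeasurable
    _ ≤ ENNReal.ofReal q * ∫⁻ x, ENNReal.ofReal (κ ^ (-p) * (p / (q * (p - 1)))) * ENNReal.ofReal (g x ^ p) ∂μ := by
        gcongr ENNReal.ofReal q * ?_
        refine lintegral_mono fun x => ?_
        rw [lintegral_const_mul' _ _ (by simp)]
        have hR : 0 ≤ (g x / κ) ^ (p / q) := Real.rpow_nonneg (div_nonneg (hg0 x) hκ.le) _
        have key : ∫⁻ l in Ioi (0:ℝ), (ENNReal.ofReal (l ^ (q - 1 - q / p)) * indicator {z : ℝ × X | κ * z.1 ^ (q / p) < g z.2} (fun z => ENNReal.ofReal (g z.2)) (l, x))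
          ≤ ∫⁻ l in Ioc (0:ℝ) ((g x / κ) ^ (p / q)), ENNReal.ofReal (l ^ (q - 1 - q / p)) * ENNReal.ofReal (g x) := by
          rw [← lintegral_indicator measurableSet_Ioi, ← lintegral_indicator measurableSet_Ioc]
          refine lintegral_mono fun l => ?_
          by_cases hl : 0 < l
          · by_cases hl2 : κ * l ^ (q / p) < g x
            · have hl3 : l ≤ (g x / κ) ^ (p / q) := by
                have h1 : l ^ (q / p) ≤ g x / κ := by rw [le_div_iff₀ hκ]; linarith
                have h2 := Real.rpow_le_rpow (by positivity) h1 (show 0 ≤ p / q by positivity)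
                rw [← Real.rpow_mul hl.le] at h2
                have : q / p * (p / q) = 1 := by field_simp
                rwa [this, Real.rpow_one] at h2
              simp [indicator, hl, hl2, hl3]
            · simp [indicator, hl2]
          · simp [indicator, hl]
        refine (mul_le_mul_right key _).trans ?_
        rw [lintegral_mul_const _ (by fun_prop), lint_Ioc_rpow (by linarith) hR, ← ENNReal.ofReal_mul (div_nonneg (Real.rpow_nonneg hR _) (by linarith)), ← ENNReal.ofReal_mul (by positivity), ← ENNReal.ofReal_mul (by positivity)]
        refine ENNReal.ofReal_le_ofReal (le_of_eq ?_)
        rcases (hg0 x).eq_or_lt with h0 | h0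
        · rw [← h0, Real.zero_rpow hp0.ne']; simp
        · have e2 : q - 1 - q / p + 1 = q * (p - 1) / p := by field_simp; ring
          rw [e2, ← Real.rpow_mul (by positivity), show p / q * (q * (p - 1) / p) = p - 1 by field_simp, Real.div_rpow h0.le hκ.le,
            Real.rpow_sub_one h0.ne', Real.rpow_sub_one hκ.ne', Real.rpow_neg hκ.le]
          field_simp
    _ = _ := by
        rw [lintegral_const_mul _ (by fun_prop), ← mul_assoc, ← ENNReal.ofReal_mul hq.le]
        congr 2
        field_simp

theorem loc_mass {n : ℕ} (hn : 2 ≤ n) {α : ℝ} (hα0 : 0 < α) {Ω : Rn n → ℝ} (hΩ : Measurable Ω) {R : ℝ} (hR : 0 < R) :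
    ∫⁻ y in closedBall (0 : Rn n) R, ‖kerK n α Ω y‖ₑ * ‖y‖ₑ ≤ (∫⁻ θ, ‖Ω θ‖ₑ ∂polarMeas n) * ENNReal.ofReal (R ^ α / α) := by
  rw [← lintegral_indicator measurableSet_closedBall]
  have := polar_bound (α := α) hn hΩ (G := indicator (closedBall (0 : Rn n) R) (fun y => ‖y‖ₑ)) (measurable_enorm.indicator measurableSet_closedBall) (ENNReal.ofReal (R ^ α / α)) ?_
  · refine le_trans (le_of_eq ?_) this
    refine lintegral_congr fun y => ?_
    by_cases hy : y ∈ closedBall (0 : Rn n) R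
    · simp [indicator_of_mem hy]
    · simp [indicator_of_notMem hy]
  · intro θ hθ
    have e := lint_Ioc_rpow (a := α - 1) (by linarith) hR.le
    rw [sub_add_cancel] at e
    rw [← e, ← lintegral_indicator measurableSet_Ioc, ← lintegral_indicator measurableSet_Ioi]
    refine lintegral_mono fun r => ?_
    by_cases hr0 : 0 < r
    · have hnorm : ‖r • θ‖ = r := by rw [norm_smul, hθ, mul_one, Real.norm_of_nonneg hr0.le]
      by_cases hr : r ≤ R
      · have h1 : r • θ ∈ closedBall (0 : Rn n) R := by simp [hnorm, hr]
        rw [indicator_of_mem (by exact hr0), indicator_of_mem h1, indicator_of_mem (by exact ⟨hr0, hr⟩), ← ofReal_norm, hnorm, ← ENNReal.ofReal_mul (by positivity)]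
        refine ENNReal.ofReal_le_ofReal (le_of_eq ?_)
        rw [show α - 1 = (α - 2) + 1 by ring, Real.rpow_add_one hr0.ne']
      · have h1 : r • θ ∉ closedBall (0 : Rn n) R := by simpa [hnorm] using hr
        rw [indicator_of_mem (by exact hr0), indicator_of_notMem h1]; simp
    · simp [indicator, hr0]

theorem loc_joint {n : ℕ} {g : Rn n → ℝ≥0∞} (hg : Measurable g) :
    Measurable (fun z : Rn n × Rn n => ∫⁻ t in Ioo (0:ℝ) 1, g (z.1 - t • z.2)) := by
  have : Measurable (fun z : (Rn n × Rn n) × ℝ => g (z.1.1 - z.2 • z.1.2)) := hg.comp (by fun_prop)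
  exact this.lintegral_prod_right'

theorem loc_meas {n : ℕ} {α : ℝ} {Ω : Rn n → ℝ} (hΩ : Measurable Ω) {R : ℝ} {g : Rn n → ℝ≥0∞} (hg : Measurable g) :
    Measurable (locOp n α Ω R g) := by
  have : Measurable (fun z : Rn n × Rn n => ‖kerK n α Ω z.2‖ₑ * ‖z.2‖ₑ * ∫⁻ t in Ioo (0:ℝ) 1, g (z.1 - t • z.2)) :=
    (((kerK_meas hΩ).comp measurable_snd).enorm.mul measurable_snd.enorm).mul (loc_joint hg)
  exact this.lintegral_prod_right'

theorem loc_int {n : ℕ} {α : ℝ} {Ω : Rn n → ℝ} (hΩ : Measurable Ω) {R : ℝ} {g : Rn n → ℝ≥0∞} (hg : Measurable g) :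
    ∫⁻ x, locOp n α Ω R g x = (∫⁻ y in closedBall (0 : Rn n) R, ‖kerK n α Ω y‖ₑ * ‖y‖ₑ) * ∫⁻ x, g x := by
  have hm : Measurable (fun z : Rn n × Rn n => ‖kerK n α Ω z.2‖ₑ * ‖z.2‖ₑ * ∫⁻ t in Ioo (0:ℝ) 1, g (z.1 - t • z.2)) :=
    (((kerK_meas hΩ).comp measurable_snd).enorm.mul measurable_snd.enorm).mul (loc_joint hg)
  unfold locOp
  rw [lintegral_lintegral_swap hm.aemeasurable, ← lintegral_mul_const _ (by exact (kerK_meas hΩ).enorm.mul measurable_enorm)]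
  refine lintegral_congr fun y => ?_
  have h1 : Measurable (fun z : Rn n × ℝ => g (z.1 - z.2 • y)) := hg.comp (by fun_prop)
  rw [lintegral_const_mul _ h1.lintegral_prod_right', lintegral_lintegral_swap h1.aemeasurable]
  congr 1
  have : ∀ t : ℝ, ∫⁻ x, g (x - t • y) = ∫⁻ x, g x := fun t => lintegral_sub_right_eq_self g (t • y)
  simp [this]

theorem loc_split {n : ℕ} {α : ℝ} {Ω : Rn n → ℝ} (hΩ : Measurable Ω) {R : ℝ} {g u : Rn n → ℝ≥0∞} {m : ℝ≥0∞}
    (hgu : ∀ x, g x ≤ u x + m) (x : Rn n) :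
    locOp n α Ω R g x ≤ locOp n α Ω R u x + (∫⁻ y in closedBall (0 : Rn n) R, ‖kerK n α Ω y‖ₑ * ‖y‖ₑ) * m := by
  have hk : Measurable (fun y => ‖kerK n α Ω y‖ₑ * ‖y‖ₑ) := (kerK_meas hΩ).enorm.mul measurable_enorm
  rw [locOp, locOp, ← lintegral_mul_const _ hk, ← lintegral_add_right _ (hk.mul_const m)]
  refine lintegral_mono fun y => ?_
  rw [← mul_add]
  gcongr
  calc _ ≤ ∫⁻ t in Ioo (0:ℝ) 1, (u (x - t • y) + m) := lintegral_mono fun t => hgu _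
    _ = _ := by rw [lintegral_add_right _ measurable_const]; simp

theorem dist_est {n : ℕ} (hn : 2 ≤ n) {α : ℝ} (hα0 : 0 < α) {Ω : Rn n → ℝ} (hΩ : Measurable Ω)
    (hW : (∫⁻ θ, ‖Ω θ‖ₑ ∂polarMeas n) ≠ ⊤) {g : Rn n → ℝ} (hg : Measurable g) {h : Rn n → ℝ} 
    {R l m a1 : ℝ} (hR : 0 < R) (hl : 0 < l) (ha1 : a1 = (∫⁻ θ, ‖Ω θ‖ₑ ∂polarMeas n).toReal / α + 1) (hm : m = l / (4 * (a1 * R ^ α)))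
    (H : ∀ x, ENNReal.ofReal (h x) ≤ locOp n α Ω R (fun y => ENNReal.ofReal (g y)) x + ENNReal.ofReal (l / 2)) :
    volume {x | l < h x} ≤ ENNReal.ofReal m⁻¹ * ∫⁻ x in {x | m < g x}, ENNReal.ofReal (g x) := by
  have hset : MeasurableSet {x | m < g x} := measurableSet_lt measurable_const hg
  have ha1p : 0 < a1 := by rw [ha1]; positivity
  have hRa : 0 < R ^ α := by positivity
  have hmp : 0 < m := by rw [hm]; positivity
  set u : Rn n → ℝ≥0∞ := indicator {x | m < g x} (fun x => ENNReal.ofReal (g x)) with hu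
  have hum : Measurable u := hg.ennreal_ofReal.indicator hset
  have hmass : (∫⁻ y in closedBall (0 : Rn n) R, ‖kerK n α Ω y‖ₑ * ‖y‖ₑ) ≤ ENNReal.ofReal (a1 * R ^ α) := by
    refine (loc_mass hn hα0 hΩ hR).trans ?_
    rw [← ENNReal.ofReal_toReal hW, ← ENNReal.ofReal_mul ENNReal.toReal_nonneg]
    refine ENNReal.ofReal_le_ofReal ?_
    rw [ha1, add_mul, mul_div_assoc', div_mul_eq_mul_div]
    linarith
  have hgu : ∀ x, ENNReal.ofReal (g x) ≤ u x + ENNReal.ofReal m := by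
    intro x
    by_cases hx : m < g x
    · rw [hu, indicator_of_mem (by exact hx)]; exact le_self_add
    · exact (ENNReal.ofReal_le_ofReal (not_lt.1 hx)).trans le_add_self
  have hsub : {x | l < h x} ⊆ {x | ENNReal.ofReal (l / 4) ≤ locOp n α Ω R u x} := by
    intro x hx
    have hx : l < h x := hx
    by_contra hcon
    have hcon : locOp n α Ω R u x < ENNReal.ofReal (l / 4) := not_le.1 hcon
    have h1 := H x
    have h2 := loc_split (α := α) (R := R) hΩ hgu x
    have h3 : (∫⁻ y in closedBall (0 : Rn n) R, ‖kerK n α Ω y‖ₑ * ‖y‖ₑ) * ENNReal.ofReal m ≤ ENNReal.ofReal (l / 4) := by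
      refine (mul_le_mul_left hmass _).trans ?_
      rw [← ENNReal.ofReal_mul (by positivity)]
      refine ENNReal.ofReal_le_ofReal (le_of_eq ?_)
      rw [hm]; field_simp
    have h4 : ENNReal.ofReal (h x) < ENNReal.ofReal l := by
      calc ENNReal.ofReal (h x) ≤ _ := h1
        _ ≤ (locOp n α Ω R u x + ENNReal.ofReal (l / 4)) + ENNReal.ofReal (l / 2) := by
            gcongr; exact h2.trans (by gcongr)
        _ < (ENNReal.ofReal (l / 4) + ENNReal.ofReal (l / 4)) + ENNReal.ofReal (l / 2) := by
            refine ENNReal.add_lt_add_right (by simp) (ENNReal.add_lt_add_right (by simp) hcon)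
        _ = ENNReal.ofReal l := by
            rw [← ENNReal.ofReal_add (by positivity) (by positivity), ← ENNReal.ofReal_add (by positivity) (by positivity)]
            congr 1; ring
    exact absurd (ENNReal.ofReal_le_ofReal hx.le) (not_le.2 h4)
  refine (measure_mono hsub).trans ?_
  refine (meas_ge_le_lintegral_div (loc_meas hΩ hum).aemeasurable (by simpa using hl) (by simp)).trans ?_
  rw [loc_int hΩ hum, hu, lintegral_indicator hset, div_eq_mul_inv, mul_right_comm]
  gcongr
  rw [← ENNReal.ofReal_inv_of_pos (by positivity)]
  refine (mul_le_mul_left hmass _).trans ?_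
  rw [← ENNReal.ofReal_mul (by positivity)]
  refine ENNReal.ofReal_le_ofReal (le_of_eq ?_)
  rw [hm]; field_simp

theorem strong_type {n : ℕ} (hn : 2 ≤ n) {α : ℝ} (hα0 : 0 < α) (hα1 : α < 1) {Ω : Rn n → ℝ} (hΩ : Measurable Ω)
    (hW : (∫⁻ θ, ‖Ω θ‖ₑ ∂polarMeas n) ≠ ⊤) (h0 : ∫ θ, Ω θ ∂polarMeas n = 0)
    {p q : ℝ} (hnp : (n : ℝ) ≤ p) (hpα : p < n / α) (hpq : 1 / q = 1 / p - α / n) :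
    ∃ C > (0 : ℝ), ∀ f : Rn n → ℝ, IsCcSmooth f →
        lqNorm n q (fun x => ENNReal.ofReal |roughOp n α Ω f x|) ≤
          ENNReal.ofReal C * lqNorm n p (fun x => ENNReal.ofReal (gradNorm f x)) := by
  have hn0 : (2:ℝ) ≤ n := by exact_mod_cast hn
  have hnpos : (0:ℝ) < n := by linarith
  have hp1 : 1 < p := by linarith
  have hp0 : 0 < p := by linarith
  have hp10 : 0 < p - 1 := by linarith
  obtain ⟨δ, hδe⟩ : ∃ δ : ℝ, δ = n / p - α := ⟨_, rfl⟩
  have hδ : 0 < δ := by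
    rw [hδe, sub_pos, lt_div_iff₀ hp0]
    rw [lt_div_iff₀ hα0] at hpα; linarith
  have hqδ : q = n / δ := by
    have : 1 / q = δ / n := by rw [hpq, hδe]; field_simp
    rw [← one_div_one_div q, this, one_div_div]
  have hq0 : 0 < q := by rw [hqδ]; positivity
  have hqp : q / p = 1 + α / δ := by
    have : (n:ℝ) / p = δ + α := by rw [hδe]; ring
    rw [hqδ, div_right_comm, this]; field_simp
  have hpp : p.HolderConjugate (p.conjExponent) := Real.HolderConjugate.conjExponent hp1
  obtain ⟨C0, hC0, H⟩ := rough_le hn hα0 hα1 hΩ hW h0 hpp hnp hδ hδe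
  obtain ⟨a1, ha1⟩ : ∃ a1 : ℝ, a1 = (∫⁻ θ, ‖Ω θ‖ₑ ∂polarMeas n).toReal / α + 1 := ⟨_, rfl⟩
  have ha1p : 0 < a1 := by rw [ha1]; positivity
  obtain ⟨a2, ha2⟩ : ∃ a2 : ℝ, a2 = C0.toReal + 1 := ⟨_, rfl⟩
  have ha2p : 0 < a2 := by rw [ha2]; positivity
  have hC0a : C0 ≤ ENNReal.ofReal a2 := by
    rw [← ENNReal.ofReal_toReal hC0]; exact ENNReal.ofReal_le_ofReal (by linarith)
  obtain ⟨D, hD⟩ : ∃ D : ℝ, D = (4 * a1) ^ p * (2 * a2) ^ (q - p) * (p / (p - 1)) := ⟨_, rfl⟩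
  have hDp : 0 < D := by rw [hD]; positivity
  refine ⟨D ^ (1 / q), by positivity, fun f hf => ?_⟩
  have hf1 : ContDiff ℝ 1 f := hf.1.of_le (by exact_mod_cast le_top)
  obtain ⟨A, hA⟩ := hf.2.exists_bound_of_continuous hf.1.continuous
  obtain ⟨L, hL⟩ := ContDiff.lipschitzWith_of_hasCompactSupport hf.2 hf1 one_ne_zero
  have hL' : ∀ x y, |f (x - y) - f x| ≤ L * ‖y‖ := by
    intro x y
    have := hL.norm_sub_le (x - y) x
    simpa using this
  have hgm : Measurable (gradNorm f) := (gradNorm_cont hf1).measurable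
  have hg0 : ∀ x, 0 ≤ gradNorm f x := fun x => norm_nonneg _
  have hTm : Measurable (fun x => |roughOp n α Ω f x|) := (rough_meas hn hα0 hα1 hΩ hW h0 hf.1.continuous hA hL').abs
  have main : ∀ M : ℝ, 0 < M → lqNorm n p (fun x => ENNReal.ofReal (gradNorm f x)) ≤ ENNReal.ofReal M →
      lqNorm n q (fun x => ENNReal.ofReal |roughOp n α Ω f x|) ≤ ENNReal.ofReal (D ^ (1 / q) * M) := by
    intro M hM hNM
    obtain ⟨κ, hκ⟩ : ∃ κ : ℝ, κ = (2 * a2 * M) ^ (-(α / δ)) / (4 * a1) := ⟨_, rfl⟩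
    have hb : 0 < 2 * a2 * M := by positivity
    have hκp : 0 < κ := by rw [hκ]; positivity
    have hI := interp (μ := (volume : Measure (Rn n))) hTm hgm (fun x => abs_nonneg _) hg0 hp1 hq0 hκp ?_
    · have e1 : ∫⁻ x, ENNReal.ofReal (gradNorm f x ^ p) ≤ ENNReal.ofReal (M ^ p) := by
        rw [lqNorm, one_div, ENNReal.rpow_inv_le_iff hp0, ENNReal.ofReal_rpow_of_pos hM] at hNM
        refine le_trans (le_of_eq (lintegral_congr fun x => ?_)) hNM
        exact (ENNReal.ofReal_rpow_of_nonneg (hg0 x) hp0.le).symm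
      rw [lqNorm, one_div, ENNReal.rpow_inv_le_iff hq0]
      have e2 : ∀ x, ENNReal.ofReal |roughOp n α Ω f x| ^ q = ENNReal.ofReal (|roughOp n α Ω f x| ^ q) :=
        fun x => ENNReal.ofReal_rpow_of_nonneg (abs_nonneg _) hq0.le
      simp only [e2]
      refine hI.trans ((mul_le_mul_right e1 _).trans ?_)
      rw [← ENNReal.ofReal_mul (by positivity), ENNReal.ofReal_rpow_of_nonneg (by positivity) hq0.le]
      refine ENNReal.ofReal_le_ofReal (le_of_eq ?_)
      rw [Real.mul_rpow (by positivity) hM.le, ← Real.rpow_mul hDp.le, inv_mul_cancel₀ hq0.ne', Real.rpow_one, hκ, hD,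
        Real.div_rpow (by positivity) (by positivity), ← Real.rpow_mul hb.le, Real.rpow_neg (by positivity) p, div_inv_eq_mul]
      have e3 : -(α / δ) * -p = q - p := by
        have : q = p * (1 + α / δ) := by rw [← hqp]; field_simp
        rw [this]; ring
      rw [e3, Real.mul_rpow (by positivity) hM.le]
      have e4 : M ^ q = M ^ (q - p) * M ^ p := by rw [← Real.rpow_add hM]; congr 1; ring
      rw [e4]; ring
    · intro l hl
      obtain ⟨R, hR⟩ : ∃ R : ℝ, R = (l / (2 * a2 * M)) ^ (-(1 / δ)) := ⟨_, rfl⟩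
      have hRp : 0 < R := by rw [hR]; positivity
      refine dist_est hn hα0 hΩ hW hgm hRp hl ha1 ?_ ?_
      · rw [hR, ← Real.rpow_mul (by positivity), hκ, hqp, Real.rpow_add hl, Real.rpow_one, show -(1 / δ) * α = -(α / δ) by ring,
          Real.div_rpow hl.le hb.le, Real.rpow_neg hl.le, Real.rpow_neg hb.le]
        have h1 : 0 < l ^ (α / δ) := by positivity
        have h2 : 0 < (2 * a2 * M) ^ (α / δ) := by positivity
        field_simp
      · intro x
        have := H R hRp f A L hf1 hA hL' x
        rw [← ofReal_norm, Real.norm_eq_abs] at this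
        refine this.trans ?_
        gcongr
        calc _ ≤ ENNReal.ofReal a2 * ENNReal.ofReal (R ^ (-δ)) * ENNReal.ofReal M := by gcongr
          _ = _ := by
            rw [← ENNReal.ofReal_mul (by positivity), ← ENNReal.ofReal_mul (by positivity)]
            congr 1
            rw [hR, ← Real.rpow_mul (by positivity), show -(1 / δ) * -δ = 1 by field_simp, Real.rpow_one]
            field_simp
  by_cases hN : lqNorm n p (fun x => ENNReal.ofReal (gradNorm f x)) = ⊤
  · rw [hN, ENNReal.mul_top (by simp; positivity)]; exact le_top
  · set N := lqNorm n p (fun x => ENNReal.ofReal (gradNorm f x)) with hNdef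
    have hlim : Tendsto (fun ε : ℝ => ENNReal.ofReal (D ^ (1 / q) * (N.toReal + ε))) (𝓝[>] 0) (𝓝 (ENNReal.ofReal (D ^ (1 / q) * (N.toReal + 0)))) := by
      refine Tendsto.mono_left ?_ nhdsWithin_le_nhds
      exact (ENNReal.continuous_ofReal.comp (by fun_prop)).tendsto 0
    rw [← ENNReal.ofReal_toReal hN, ← ENNReal.ofReal_mul (by positivity)]
    rw [add_zero] at hlim
    refine ge_of_tendsto hlim ?_
    filter_upwards [self_mem_nhdsWithin] with ε hε
    have hε : 0 < ε := hε
    refine main _ (by positivity) ?_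
    rw [← ENNReal.ofReal_toReal hN]
    exact ENNReal.ofReal_le_ofReal (by simp; linarith)

/-- Sobolev mapping properties of `T_{Ω,α}`, `0 < α < 1`,
`Ω ∈ L(log L)^{1/n'}(𝕊^{n-1})` of mean zero:
`T_{Ω,α} : Ẇ^{1,p} → L^q` for `n < p < n/α`, `1/q = 1/p - α/n`, and
`T_{Ω,α} : Ẇ^{1,n} → L^{n/(1-α),∞}`. -/
theorem statement7 (n : ℕ) (hn : 2 ≤ n) (α : ℝ) (hα0 : 0 < α) (hα1 : α < 1)
    (Ω : Rn n → ℝ) (hΩmeas : Measurable Ω) (hΩorl : (orliczSet n Ω).Nonempty)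
    (hΩint : Integrable Ω (sphereMeasure n))
    (hΩmean : ∫ y, Ω y ∂sphereMeasure n = 0) :
    (∀ p q : ℝ, (n : ℝ) < p → p < n / α → 1 / q = 1 / p - α / n →
      ∃ C > (0 : ℝ), ∀ f : Rn n → ℝ, IsCcSmooth f →
        lqNorm n q (fun x => ENNReal.ofReal |roughOp n α Ω f x|) ≤
          ENNReal.ofReal C * lqNorm n p (fun x => ENNReal.ofReal (gradNorm f x))) ∧
    (∃ C > (0 : ℝ), ∀ f : Rn n → ℝ, IsCcSmooth f →
      weakNorm n ((n : ℝ) / (1 - α)) (fun x => ENNReal.ofReal |roughOp n α Ω f x|) ≤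
        ENNReal.ofReal C * lqNorm n n (fun x => ENNReal.ofReal (gradNorm f x))) := by
  obtain ⟨c, hc, hpol⟩ := polar_eq n hn
  have hint : Integrable Ω (polarMeas n) := by rw [hpol]; exact hΩint.smul_measure hc
  have hW : (∫⁻ θ, ‖Ω θ‖ₑ ∂polarMeas n) ≠ ⊤ := hint.2.ne
  have h0 : ∫ θ, Ω θ ∂polarMeas n = 0 := by
    rw [hpol, integral_smul_measure, hΩmean, smul_zero]
  refine ⟨fun p q hnp hpα hpq => strong_type hn hα0 hα1 hΩmeas hW h0 hnp.le hpα hpq, ?_⟩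
  have hnpos : (0:ℝ) < n := by exact_mod_cast (by omega : 0 < n)
  have h1α : 0 < 1 - α := by linarith
  obtain ⟨C, hC, H⟩ := strong_type (p := n) (q := n / (1 - α)) hn hα0 hα1 hΩmeas hW h0 le_rfl
    (by rw [lt_div_iff₀ hα0]; nlinarith) (by rw [one_div_div]; ring)
  refine ⟨C, hC, fun f hf => le_trans ?_ (H f hf)⟩
  have hf1 : ContDiff ℝ 1 f := hf.1.of_le (by exact_mod_cast le_top)
  obtain ⟨A, hA⟩ := hf.2.exists_bound_of_continuous hf.1.continuous
  obtain ⟨L, hL⟩ := ContDiff.lipschitzWith_of_hasCompactSupport hf.2 hf1 one_ne_zero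
  have hL2 : ∀ x y, |f (x - y) - f x| ≤ L * ‖y‖ := by
    intro x y
    have := hL.norm_sub_le (x - y) x
    simpa using this
  have hTm : Measurable (fun x => |roughOp n α Ω f x|) := (rough_meas hn hα0 hα1 hΩmeas hW h0 hf.1.continuous hA hL2).abs
  have hq0 : 0 < (n:ℝ) / (1 - α) := by positivity
  generalize (n:ℝ) / (1 - α) = q at hq0 ⊢
  rw [weakNorm, lqNorm]
  refine iSup₂_le fun l hl => ?_
  rw [one_div, ENNReal.le_rpow_inv_iff hq0, ENNReal.mul_rpow_of_nonneg _ _ hq0.le, ← ENNReal.rpow_mul, inv_mul_cancel₀ hq0.ne', ENNReal.rpow_one]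
  have hm := mul_meas_ge_le_lintegral₀ (μ := (volume : Measure (Rn n))) ((hTm.ennreal_ofReal.pow_const q).aemeasurable) (ENNReal.ofReal l ^ q)
  refine le_trans ?_ hm
  gcongr 1
  refine measure_mono fun x hx => ?_
  exact ENNReal.rpow_le_rpow (le_of_lt hx) hq0.le

end
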